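/- arXiv:1812.10279 — 2 statements merged into one kernel-verified Lean document; each statement's English description precedes it below -/
import Mathlib

section
/- For any P⁻ > 0, γ ≥ 1 and μ, k > 0, there exists ε > 0 with the following property: if s > 0, P⁺ > 0, |P⁺ − P⁻| < ε and P⁺ < P⁻ (respectively, if s < 0, |P⁺ − P⁻| < ε and P⁻ < P⁺), then there exists a heteroclinic solution of the planar profile system P' = Q, Q' = (2/k²)f(P) − (2μs/k²)Q + Q²/P connecting (P⁻, 0) to (P⁺, 0), i.e. a C¹ solution (P, Q) : ℝ → (0,∞) × ℝ defined for all y ∈ ℝ with (P(y), Q(y)) → (P⁻, 0) as y → −∞ and (P(y), Q(y)) → (P⁺, 0) as y → +∞. -/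
open Filter Topology

/-- The nonlinearity of the traveling-wave (profile) equation of the viscous QHD system,
with end states `Pm = P⁻`, `Pp = P⁺` and pressure exponent `γ`. -/
noncomputable def profileF (γ Pm Pp P : ℝ) : ℝ :=
  P ^ γ + Pm * Pp / P * ((Pp ^ γ - Pm ^ γ) / (Pp - Pm))
    - (Pp ^ (γ + 1) - Pm ^ (γ + 1)) / (Pp - Pm)

open scoped NNReal

/-- componentwise clamp. -/
noncomputable def clampN (N : ℝ) (z : ℝ × ℝ) : ℝ × ℝ :=
  (max (-N) (min N z.1), max (-N) (min N z.2))

lemma clamp_lip (N a b : ℝ) : |max (-N) (min N a) - max (-N) (min N b)| ≤ |a - b| := by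
  refine (abs_max_sub_max_le_max _ _ _ _).trans ?_
  simp only [sub_self, abs_zero]
  refine max_le (abs_nonneg _) ?_
  refine (abs_min_sub_min_le_max _ _ _ _).trans ?_
  simp

lemma clampN_lip (N : ℝ) : LipschitzWith 1 (clampN N) := by
  refine LipschitzWith.of_dist_le_mul fun x y => ?_
  simp only [NNReal.coe_one, one_mul, Prod.dist_eq, clampN, Real.dist_eq]
  exact max_le_max (clamp_lip _ _ _) (clamp_lip _ _ _)

lemma clampN_norm_le {N : ℝ} (hN : 0 ≤ N) (z : ℝ × ℝ) : ‖clampN N z‖ ≤ N := by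
  simp only [clampN, Prod.norm_def, Real.norm_eq_abs]
  refine max_le ?_ ?_ <;> rw [abs_le] <;> constructor <;> simp <;> linarith

lemma clampN_norm_le' {N : ℝ} (hN : 0 ≤ N) (z : ℝ × ℝ) : ‖clampN N z‖ ≤ ‖z‖ := by
  have h := (clampN_lip N).dist_le_mul z 0
  have h0 : clampN N 0 = 0 := by simp [clampN, hN]
  rw [h0] at h
  simpa using h

lemma clampN_eq {N : ℝ} {z : ℝ × ℝ} (h : ‖z‖ ≤ N) : clampN N z = z := by
  rw [Prod.norm_def] at h
  have h1 := abs_le.1 ((le_max_left _ _).trans h)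
  have h2 := abs_le.1 ((le_max_right _ _).trans h)
  ext
  · simp [clampN, h1.1, h1.2]
  · simp [clampN, h2.1, h2.2]

lemma local_sol (F : ℝ × ℝ → ℝ × ℝ) (K : ℝ≥0) (hF : LipschitzWith K F) (x0 : ℝ × ℝ) (T : ℝ)
    (hT : 0 < T) :
    ∃ z : ℝ → ℝ × ℝ, z 0 = x0 ∧ ∀ t ∈ Set.Ioo (-T) T, HasDerivAt z (F (z t)) t := by
  set N : ℝ := gronwallBound ‖x0‖ K ‖F 0‖ T with hNdef
  have hmono := gronwallBound_mono (norm_nonneg x0) (norm_nonneg (F 0)) (K.2)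
  have hN : 0 ≤ N := by
    have := hmono hT.le
    rw [gronwallBound_x0] at this
    exact (norm_nonneg _).trans this
  have hFb : ∀ x, ‖F x‖ ≤ K * ‖x‖ + ‖F 0‖ := by
    intro x
    have := hF.dist_le_mul x 0
    rw [dist_eq_norm, dist_zero_right] at this
    have h2 : ‖F x‖ ≤ ‖F x - F 0‖ + ‖F 0‖ := by simpa using norm_add_le (F x - F 0) (F 0)
    linarith
  let f : ℝ × ℝ → ℝ × ℝ := fun x => F (clampN N x)
  have hfl : LipschitzWith K f := by
    have := hF.comp (clampN_lip N)
    rw [mul_one] at this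
    exact this
  let L : ℝ≥0 := ⟨K * N + ‖F 0‖, by positivity⟩
  let a : ℝ≥0 := ⟨(K * N + ‖F 0‖) * T, by positivity⟩
  have hPL : IsPicardLindelof (fun _ => f) (tmin := -T) (tmax := T)
      ⟨0, by constructor <;> linarith⟩ x0 a 0 L K := by
    apply IsPicardLindelof.of_time_independent
    · intro x _
      refine (hFb _).trans ?_
      show _ ≤ (K * N + ‖F 0‖ : ℝ)
      have := clampN_norm_le hN x
      gcongr
    · exact hfl.lipschitzOnWith
    · simp [L, a]
      exact le_rfl
  obtain ⟨z, hz0, hz⟩ := hPL.exists_eq_forall_mem_Icc_hasDerivWithinAt₀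
  have hz0 : z 0 = x0 := hz0
  have hcont : ContinuousOn z (Set.Icc (-T) T) := fun t ht => (hz t ht).continuousWithinAt
  have hder : ∀ t ∈ Set.Ioo (-T) T, HasDerivAt z (f (z t)) t := fun t ht =>
    (hz t (Set.Ioo_subset_Icc_self ht)).hasDerivAt (Icc_mem_nhds ht.1 ht.2)
  have hfb : ∀ x, ‖f x‖ ≤ K * ‖x‖ + ‖F 0‖ := by
    intro x
    refine (hFb _).trans ?_
    have := clampN_norm_le' hN x
    gcongr
  have hb1 : ∀ t ∈ Set.Icc 0 T, ‖z t‖ ≤ gronwallBound ‖x0‖ K ‖F 0‖ (t - 0) := by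
    apply norm_le_gronwallBound_of_norm_deriv_right_le (f' := fun t => f (z t))
    · exact hcont.mono (Set.Icc_subset_Icc_left (by linarith))
    · intro x hx
      exact (hder x ⟨by linarith [hx.1], hx.2⟩).hasDerivWithinAt
    · rw [hz0]
    · intro x _; exact hfb _
  have hb2 : ∀ t ∈ Set.Icc 0 T, ‖z (-t)‖ ≤ gronwallBound ‖x0‖ K ‖F 0‖ (t - 0) := by
    apply norm_le_gronwallBound_of_norm_deriv_right_le (f := fun t => z (-t))
      (f' := fun t => - f (z (-t)))
    · refine hcont.comp continuous_neg.continuousOn ?_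
      intro t ht
      constructor <;> linarith [ht.1, ht.2]
    · intro x hx
      have := (hder (-x) ⟨by linarith [hx.2], by linarith [hx.1]⟩)
      have h2 := HasDerivAt.scomp x this (hasDerivAt_neg x)
      rw [neg_one_smul] at h2
      exact h2.hasDerivWithinAt
    · simp [hz0]
    · intro x _; rw [norm_neg]; exact hfb _
  refine ⟨z, hz0, fun t ht => ?_⟩
  have hzN : ‖z t‖ ≤ N := by
    rcases le_total 0 t with h | h
    · refine (hb1 t ⟨h, ht.2.le⟩).trans (hmono (by linarith [ht.2]))
    · have := (hb2 (-t) ⟨by linarith, by linarith [ht.1]⟩).trans (hmono (by linarith [ht.1] : -t - 0 ≤ T))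
      simpa using this
  have := hder t ht
  simp only [f] at this
  rwa [clampN_eq hzN] at this

lemma global_sol (F : ℝ × ℝ → ℝ × ℝ) (K : ℝ≥0) (hF : LipschitzWith K F) (x0 : ℝ × ℝ) :
    ∃ z : ℝ → ℝ × ℝ, z 0 = x0 ∧ ∀ t, HasDerivAt z (F (z t)) t := by
  have h := fun T : ℝ => fun hT : 0 < T => local_sol F K hF x0 T hT
  choose! z hz0 hz using h
  have huniq : ∀ S T : ℝ, 0 < S → S ≤ T → Set.EqOn (z S) (z T) (Set.Ioo (-S) S) := by
    intro S T hS hST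
    apply ODE_solution_unique_of_mem_Ioo (v := fun _ => F) (s := fun _ => Set.univ) (K := K)
      (t₀ := 0)
    · intro t _; exact hF.lipschitzOnWith
    · constructor <;> linarith
    · intro t ht; exact ⟨hz S hS t ht, trivial⟩
    · intro t ht; exact ⟨hz T (by linarith) t ⟨by linarith [ht.1], by linarith [ht.2]⟩, trivial⟩
    · rw [hz0 S hS, hz0 T (by linarith)]
  refine ⟨fun t => z (|t| + 1) t, hz0 _ (by positivity), fun t => ?_⟩
  have hpos : 0 < |t| + 2 := by positivity
  have h1 : ∀ r ∈ Set.Ioo (-(|t|+1)) (|t|+1), z (|r| + 1) r = z (|t| + 2) r := by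
    intro r hr
    have : |r| < |t| + 1 := abs_lt.2 hr
    exact huniq _ _ (by positivity) (by linarith) (abs_lt.1 (by linarith))
  have hmem : t ∈ Set.Ioo (-(|t|+1)) (|t|+1) := abs_lt.1 (by linarith)
  have h2 := hz (|t| + 2) hpos t (abs_lt.1 (by linarith))
  show HasDerivAt _ (F (z (|t| + 1) t)) t
  rw [h1 t hmem]
  refine h2.congr_of_eventuallyEq ?_
  filter_upwards [Ioo_mem_nhds hmem.1 hmem.2] with r hr using h1 r hr

/-- Barbalat-type lemma. -/
lemma barbalat {f h : ℝ → ℝ} {l K : ℝ} (hf : ∀ t, 0 ≤ t → HasDerivAt f (h t) t)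
    (hl : Tendsto f atTop (𝓝 l))
    (hh : ∀ s t, 0 ≤ s → 0 ≤ t → |h s - h t| ≤ K * |s - t|) :
    Tendsto h atTop (𝓝 0) := by
  have hK : 0 ≤ K := by
    have := (abs_nonneg _).trans (hh 1 0 (by norm_num) le_rfl)
    simpa using this
  rw [Metric.tendsto_atTop]
  intro ε hε
  set δ : ℝ := ε / (2 * (K + 1)) with hδ
  have hδpos : 0 < δ := by positivity
  have hKδ : K * δ < ε / 2 := by
    rw [hδ]
    have : K * (ε / (2 * (K + 1))) = ε / 2 * (K / (K + 1)) := by field_simp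
    rw [this]
    have h1 : K / (K + 1) < 1 := by rw [div_lt_one (by linarith)]; linarith
    nlinarith
  obtain ⟨N, hN⟩ := Metric.tendsto_atTop.1 hl (ε * δ / 4) (by positivity)
  refine ⟨max N 0, fun t ht => ?_⟩
  have ht0 : 0 ≤ t := (le_max_right _ _).trans ht
  have htN : N ≤ t := (le_max_left _ _).trans ht
  obtain ⟨ξ, hξ, hmv⟩ := exists_hasDerivAt_eq_slope f h (a := t) (b := t + δ) (by linarith)
    (fun r hr => (hf r (by linarith [hr.1])).continuousAt.continuousWithinAt)
    (fun r hr => hf r (by linarith [hr.1]))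
  have e1 := hN t htN
  have e2 := hN (t + δ) (by linarith)
  rw [Real.dist_eq, abs_lt] at e1 e2
  have e3 := hh ξ t (by linarith [hξ.1]) ht0
  have e4 : |ξ - t| ≤ δ := abs_le.2 ⟨by linarith [hξ.1], by linarith [hξ.2]⟩
  have e5 : |h ξ| < ε / 2 := by
    rw [hmv, abs_div]
    have : |t + δ - t| = δ := by rw [add_sub_cancel_left, abs_of_pos hδpos]
    rw [this, div_lt_iff₀ hδpos, abs_lt]
    constructor <;> linarith [e1.1, e1.2, e2.1, e2.2]
  have e6 : K * |ξ - t| ≤ K * δ := by gcongr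
  rw [abs_lt] at e5
  have e7 := abs_le.1 e3
  rw [Real.dist_eq, sub_zero, abs_lt]
  constructor <;> linarith [e5.1, e5.2, e7.1, e7.2]

lemma lip_of_bound {f h : ℝ → ℝ} {C : ℝ} (hf : ∀ t, 0 ≤ t → HasDerivAt f (h t) t)
    (hb : ∀ t, 0 ≤ t → |h t| ≤ C) :
    ∀ s t, 0 ≤ s → 0 ≤ t → |f s - f t| ≤ C * |s - t| := by
  intro s t hs ht
  have := Convex.norm_image_sub_le_of_norm_hasDerivWithin_le (f := f) (f' := h) (s := Set.Ici 0)
    (x := t) (y := s) (C := C)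
    (fun r hr => (hf r hr).hasDerivWithinAt) (fun r hr => hb r hr) (convex_Ici 0) ht hs
  simpa using this

lemma first_time {C : Set ℝ} (hC : IsClosed C) {t : ℝ} (ht : 0 ≤ t) (h : t ∈ C) :
    ∃ t1, 0 ≤ t1 ∧ t1 ≤ t ∧ t1 ∈ C ∧ ∀ s, 0 ≤ s → s < t1 → s ∉ C := by
  have hcomp : IsCompact (Set.Icc 0 t ∩ C) := isCompact_Icc.inter_right hC
  obtain ⟨t1, h1, h2⟩ := hcomp.exists_isLeast ⟨t, ⟨ht, le_rfl⟩, h⟩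
  refine ⟨t1, h1.1.1, h1.1.2, h1.2, fun s hs hs1 hsC => ?_⟩
  exact absurd (h2 ⟨⟨hs, hs1.le.trans h1.1.2⟩, hsC⟩) (not_le.2 hs1)

lemma lasalle {g V : ℝ → ℝ} {K : ℝ≥0} (hg : LipschitzWith K g)
    (hV : ∀ u, HasDerivAt V (-g u) u) {A B L c : ℝ} (hc : 0 < c)
    (hneg : ∀ u, A < u → u < B → g u < 0) (hpos : ∀ u, u < A → 0 < g u)
    (hL : V B ≤ V L) {u v : ℝ → ℝ} (hu : ∀ t, HasDerivAt u (v t) t)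
    (hv : ∀ t, HasDerivAt v (g (u t) - c * v t) t) (hu0 : L < u 0) (hu0' : u 0 < B)
    (hE : (v 0) ^ 2 / 2 + V (u 0) < V B) :
    (∀ t, 0 ≤ t → L < u t ∧ u t < B) ∧ Tendsto u atTop (𝓝 A) ∧ Tendsto v atTop (𝓝 0) := by
  set E : ℝ → ℝ := fun t => (v t) ^ 2 / 2 + V (u t) with hEdef
  have hEd : ∀ t, HasDerivAt E (-c * (v t) ^ 2) t := by
    intro t
    have h1 := (((hv t).pow 2).div_const 2).add ((hV (u t)).comp t (hu t))
    refine h1.congr_deriv ?_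
    simp; ring
  have hEanti : Antitone E := by
    apply antitone_of_hasDerivAt_nonpos hEd
    intro t
    have := mul_nonneg hc.le (sq_nonneg (v t))
    simp; linarith
  have hVle : ∀ t, 0 ≤ t → V (u t) ≤ E 0 := by
    intro t ht
    have := hEanti ht
    have h2 : E t = (v t) ^ 2 / 2 + V (u t) := rfl
    nlinarith [sq_nonneg (v t)]
  have hcu : Continuous u := continuous_iff_continuousAt.2 fun t => (hu t).continuousAt
  have hcv : Continuous v := continuous_iff_continuousAt.2 fun t => (hv t).continuousAt
  have hcV : Continuous V := continuous_iff_continuousAt.2 fun t => (hV t).continuousAt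
  have hin : ∀ t, 0 ≤ t → L < u t ∧ u t < B := by
    intro t ht
    constructor
    · by_contra hcon
      push Not at hcon
      obtain ⟨r, hr, hr2⟩ := intermediate_value_Icc' ht hcu.continuousOn ⟨hcon, hu0.le⟩
      have := hVle r hr.1
      rw [hr2] at this
      have : E 0 < V B := hE
      linarith
    · by_contra hcon
      push Not at hcon
      obtain ⟨r, hr, hr2⟩ := intermediate_value_Icc ht hcu.continuousOn ⟨hu0'.le, hcon⟩
      have := hVle r hr.1
      rw [hr2] at this
      have : E 0 < V B := hE
      linarith
  -- bounds
  obtain ⟨m, hm⟩ := (isCompact_Icc (a := L) (b := B)).bddBelow_image hcV.continuousOn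
  have hmV : ∀ t, 0 ≤ t → m ≤ V (u t) := fun t ht =>
    hm ⟨u t, ⟨(hin t ht).1.le, (hin t ht).2.le⟩, rfl⟩
  set W : ℝ := 2 * (E 0 - m) + 1 with hW
  have hWv : ∀ t, 0 ≤ t → |v t| ≤ W := by
    intro t ht
    have h1 : E t ≤ E 0 := hEanti ht
    have h2 : E t = (v t) ^ 2 / 2 + V (u t) := rfl
    have h3 := hmV t ht
    have h4 : |v t| ^ 2 = v t ^ 2 := sq_abs _
    nlinarith [sq_nonneg (|v t| - 1), abs_nonneg (v t)]
  have hW0 : 0 ≤ W := (abs_nonneg _).trans (hWv 0 le_rfl)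
  obtain ⟨M, hM⟩ := (isCompact_Icc (a := L) (b := B)).bddAbove_image
    (hg.continuous.abs.continuousOn)
  have hMg : ∀ t, 0 ≤ t → |g (u t)| ≤ M := fun t ht =>
    hM ⟨u t, ⟨(hin t ht).1.le, (hin t ht).2.le⟩, rfl⟩
  have hdv : ∀ t, 0 ≤ t → |g (u t) - c * v t| ≤ M + c * W := by
    intro t ht
    refine (abs_sub _ _).trans ?_
    rw [abs_mul, abs_of_pos hc]
    have := hMg t ht
    have := hWv t ht
    gcongr
  have hvl := lip_of_bound (fun t _ => hv t) hdv
  have hul := lip_of_bound (fun t _ => hu t) hWv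
  -- E converges
  have hEl : ∃ l, Tendsto E atTop (𝓝 l) := by
    have hE0 : Tendsto (fun t => E (max t 0)) atTop (𝓝 (⨅ t, E (max t 0))) := by
      apply tendsto_atTop_ciInf
      · intro a b hab; exact hEanti (max_le_max_right 0 hab)
      · refine ⟨m, ?_⟩
        rintro _ ⟨t, rfl⟩
        have := hmV (max t 0) (le_max_right _ _)
        show m ≤ (v (max t 0)) ^ 2 / 2 + V (u (max t 0))
        nlinarith [sq_nonneg (v (max t 0))]
    refine ⟨_, hE0.congr' ?_⟩
    filter_upwards [eventually_ge_atTop 0] with t ht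
    rw [max_eq_left ht]
  obtain ⟨l, hl⟩ := hEl
  have hv2 : Tendsto (fun t => -c * (v t) ^ 2) atTop (𝓝 0) := by
    apply barbalat (K := c * ((M + c * W) * (2 * W))) (fun t _ => hEd t) hl
    intro s t hs ht
    have e : -c * v s ^ 2 - -c * v t ^ 2 = -(c * ((v s - v t) * (v s + v t))) := by ring
    rw [e, abs_neg, abs_mul, abs_mul, abs_of_pos hc]
    have h1 := hvl s t hs ht
    have h2 : |v s + v t| ≤ 2 * W := (abs_add_le _ _).trans (by linarith [hWv s hs, hWv t ht])
    calc c * (|v s - v t| * |v s + v t|) ≤ c * (((M + c * W) * |s - t|) * (2 * W)) := by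
          have := (abs_nonneg _).trans h1
          gcongr
      _ = _ := by ring
  have hv0 : Tendsto v atTop (𝓝 0) := by
    have h1 : Tendsto (fun t => (v t) ^ 2) atTop (𝓝 0) := by
      have := hv2.const_mul (-c)⁻¹
      rw [mul_zero] at this
      refine this.congr fun t => ?_
      field_simp
    have h2 := h1.sqrt
    simp only [Real.sqrt_sq_eq_abs, Real.sqrt_zero] at h2
    exact (tendsto_zero_iff_abs_tendsto_zero _).2 h2
  have hdv0 : Tendsto (fun t => g (u t) - c * v t) atTop (𝓝 0) := by
    apply barbalat (K := K * W + c * (M + c * W)) (fun t _ => hv t) hv0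
    intro s t hs ht
    have e : g (u s) - c * v s - (g (u t) - c * v t) = (g (u s) - g (u t)) - c * (v s - v t) := by
      ring
    rw [e]
    refine (abs_sub _ _).trans ?_
    rw [abs_mul, abs_of_pos hc]
    have h1 := hvl s t hs ht
    have h2 := hul s t hs ht
    have h3 : |g (u s) - g (u t)| ≤ K * |u s - u t| := hg.dist_le_mul _ _
    calc |g (u s) - g (u t)| + c * |v s - v t|
        ≤ K * (W * |s - t|) + c * ((M + c * W) * |s - t|) := by
          refine add_le_add (h3.trans ?_) ?_ <;> gcongr
      _ = _ := by ring
  have hg0 : Tendsto (fun t => g (u t)) atTop (𝓝 0) := by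
    have := hdv0.add (hv0.const_mul c)
    simpa using this
  refine ⟨hin, ?_, hv0⟩
  rw [Metric.tendsto_atTop]
  intro ε hε
  set C : Set ℝ := Set.Icc L B ∩ {w | V w ≤ E 0 ∧ ε ≤ |w - A|} with hC
  have hCc : IsCompact C := by
    apply isCompact_Icc.inter_right
    exact (isClosed_le hcV continuous_const).inter
      (isClosed_le continuous_const (continuous_id.sub continuous_const).abs)
  have hgC : ∀ w ∈ C, 0 < |g w| := by
    intro w hw
    rw [abs_pos]
    have hwA : w ≠ A := by
      rintro rfl
      have := hw.2.2
      simp at this; linarith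
    rcases lt_or_gt_of_ne hwA with h | h
    · exact (hpos w h).ne'
    · refine (hneg w h (lt_of_le_of_ne hw.1.2 ?_)).ne
      rintro rfl
      have := hw.2.1
      have : E 0 < V w := hE
      linarith
  have hmin : ∃ d > 0, ∀ w ∈ C, d ≤ |g w| := by
    rcases C.eq_empty_or_nonempty with h | h
    · exact ⟨1, one_pos, by simp [h]⟩
    · obtain ⟨w, hw, hw2⟩ := hCc.exists_isMinOn h hg.continuous.abs.continuousOn
      exact ⟨_, hgC w hw, fun x hx => hw2 hx⟩
  obtain ⟨d, hd, hdC⟩ := hmin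
  obtain ⟨N, hN⟩ := Metric.tendsto_atTop.1 hg0 d hd
  refine ⟨max N 0, fun t ht => ?_⟩
  have ht0 : 0 ≤ t := (le_max_right _ _).trans ht
  have h1 := hN t ((le_max_left _ _).trans ht)
  rw [Real.dist_eq, sub_zero] at h1
  rw [Real.dist_eq]
  by_contra hcon
  push Not at hcon
  have := hdC (u t) ⟨⟨(hin t ht0).1.le, (hin t ht0).2.le⟩, hVle t ht0, hcon⟩
  linarith

/-- limit at the saddle -/
lemma saddle {g V : ℝ → ℝ} {K : ℝ≥0} (hg : LipschitzWith K g)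
    (hV : ∀ u, HasDerivAt V (-g u) u) {A B c : ℝ} (hc : 0 < c)
    (hneg : ∀ u, A < u → u < B → g u < 0)
    {x y : ℝ → ℝ} (hx : ∀ t, HasDerivAt x (y t) t)
    (hy : ∀ t, HasDerivAt y (g (x t) + c * y t) t) (hx0 : A < x 0)
    (h : ∀ t, 0 ≤ t → 0 < y t ∧ x t < B) :
    (y 0) ^ 2 / 2 + V (x 0) < V B ∧ Tendsto x atTop (𝓝 B) ∧ Tendsto y atTop (𝓝 0) := by
  set H : ℝ → ℝ := fun t => (y t) ^ 2 / 2 + V (x t) with hHdef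
  have hHd : ∀ t, HasDerivAt H (c * (y t) ^ 2) t := by
    intro t
    have h1 := (((hy t).pow 2).div_const 2).add ((hV (x t)).comp t (hx t))
    refine h1.congr_deriv ?_
    simp; ring
  have hHmono : Monotone H := by
    apply monotone_of_hasDerivAt_nonneg hHd
    intro t
    have := mul_nonneg hc.le (sq_nonneg (y t))
    simpa using this
  have hcx : Continuous x := continuous_iff_continuousAt.2 fun t => (hx t).continuousAt
  have hcy : Continuous y := continuous_iff_continuousAt.2 fun t => (hy t).continuousAt
  have hcV : Continuous V := continuous_iff_continuousAt.2 fun t => (hV t).continuousAt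
  have hxmono : MonotoneOn x (Set.Ici 0) := by
    apply monotoneOn_of_hasDerivWithinAt_nonneg (convex_Ici 0) hcx.continuousOn
      (f' := y) (fun t _ => (hx t).hasDerivWithinAt)
    intro t ht
    rw [interior_Ici] at ht
    exact (h t (le_of_lt ht)).1.le
  have hxA : ∀ t, 0 ≤ t → A < x t := fun t ht =>
    lt_of_lt_of_le hx0 (hxmono (Set.mem_Ici.2 le_rfl) ht ht)
  have hVmono : MonotoneOn V (Set.Icc A B) := by
    apply monotoneOn_of_hasDerivWithinAt_nonneg (convex_Icc A B) hcV.continuousOn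
      (f' := fun u => -g u) (fun t _ => (hV t).hasDerivWithinAt)
    intro t ht
    rw [interior_Icc] at ht
    linarith [hneg t ht.1 ht.2]
  have hAB : A < B := hx0.trans (h 0 le_rfl).2
  have hVB : ∀ t, 0 ≤ t → V (x t) ≤ V B := fun t ht =>
    hVmono ⟨(hxA t ht).le, (h t ht).2.le⟩ ⟨hAB.le, le_rfl⟩ (h t ht).2.le
  have hHB : ∀ t, 0 ≤ t → H t ≤ V B := by
    intro t0 ht0
    by_contra hcon
    push Not at hcon
    set δ := Real.sqrt (2 * (H t0 - V B)) with hδ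
    have hδpos : 0 < δ := Real.sqrt_pos.2 (by linarith)
    have hyδ : ∀ t, t0 ≤ t → δ ≤ y t := by
      intro t ht
      apply Real.sqrt_le_iff.2
      refine ⟨(h t (ht0.trans ht)).1.le, ?_⟩
      have h1 := hHmono ht
      have h2 : H t = (y t) ^ 2 / 2 + V (x t) := rfl
      have h3 := hVB t (ht0.trans ht)
      linarith
    have hmm : MonotoneOn (fun t => x t - δ * t) (Set.Ici t0) := by
      apply monotoneOn_of_hasDerivWithinAt_nonneg (convex_Ici t0) (by fun_prop)
        (f' := fun t => y t - δ * 1)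
        (fun t _ => ((hx t).sub ((hasDerivAt_id t).const_mul δ)).hasDerivWithinAt)
      intro t ht
      rw [interior_Ici] at ht
      linarith [hyδ t (le_of_lt ht)]
    set t2 := t0 + (B - A) / δ with ht2
    have hle : t0 ≤ t2 := by
      have : 0 ≤ (B - A) / δ := div_nonneg (by linarith) hδpos.le
      linarith
    have e1 := hmm (Set.mem_Ici.2 le_rfl) (Set.mem_Ici.2 hle) hle
    have e2 : δ * t2 = δ * t0 + (B - A) := by rw [ht2]; field_simp
    simp only at e1
    have e3 := (h t2 (ht0.trans hle)).2
    have e4 := hxA t0 ht0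
    linarith
  have hstrict : H 0 < V B := by
    have h1 : StrictMonoOn H (Set.Icc 0 1) := by
      apply strictMonoOn_of_hasDerivWithinAt_pos (convex_Icc 0 1) (f' := fun t => c * (y t) ^ 2)
        (fun t _ => (hHd t).continuousAt.continuousWithinAt)
        (fun t _ => (hHd t).hasDerivWithinAt)
      intro t ht
      rw [interior_Icc] at ht
      have := (h t ht.1.le).1
      positivity
    have := h1 (Set.left_mem_Icc.2 zero_le_one) (Set.right_mem_Icc.2 zero_le_one) zero_lt_one
    linarith [hHB 1 zero_le_one]
  obtain ⟨m, hm⟩ := (isCompact_Icc (a := A) (b := B)).bddBelow_image hcV.continuousOn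
  have hmV : ∀ t, 0 ≤ t → m ≤ V (x t) := fun t ht =>
    hm ⟨x t, ⟨(hxA t ht).le, (h t ht).2.le⟩, rfl⟩
  set W : ℝ := 2 * (V B - m) + 1 with hW
  have hWv : ∀ t, 0 ≤ t → |y t| ≤ W := by
    intro t ht
    have h1 := hHB t ht
    have h2 : H t = (y t) ^ 2 / 2 + V (x t) := rfl
    have h3 := hmV t ht
    have h4 : |y t| ^ 2 = y t ^ 2 := sq_abs _
    nlinarith [sq_nonneg (|y t| - 1), abs_nonneg (y t)]
  have hW0 : 0 ≤ W := (abs_nonneg _).trans (hWv 0 le_rfl)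
  obtain ⟨M, hM⟩ := (isCompact_Icc (a := A) (b := B)).bddAbove_image
    (hg.continuous.abs.continuousOn)
  have hMg : ∀ t, 0 ≤ t → |g (x t)| ≤ M := fun t ht =>
    hM ⟨x t, ⟨(hxA t ht).le, (h t ht).2.le⟩, rfl⟩
  have hdv : ∀ t, 0 ≤ t → |g (x t) + c * y t| ≤ M + c * W := by
    intro t ht
    refine (abs_add_le _ _).trans ?_
    rw [abs_mul, abs_of_pos hc]
    have := hMg t ht
    have := hWv t ht
    gcongr
  have hvl := lip_of_bound (fun t _ => hy t) hdv
  have hul := lip_of_bound (fun t _ => hx t) hWv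
  have hxl : ∃ l, A < l ∧ l ≤ B ∧ Tendsto x atTop (𝓝 l) := by
    have hbdd : BddAbove (Set.range fun t => x (max t 0)) := by
      refine ⟨B, ?_⟩
      rintro _ ⟨t, rfl⟩
      exact (h _ (le_max_right _ _)).2.le
    have hE0 : Tendsto (fun t => x (max t 0)) atTop (𝓝 (⨆ t, x (max t 0))) := by
      apply tendsto_atTop_ciSup _ hbdd
      intro a b hab
      exact hxmono (Set.mem_Ici.2 (le_max_right _ _)) (Set.mem_Ici.2 (le_max_right _ _))
        (max_le_max_right 0 hab)
    refine ⟨_, ?_, ?_, hE0.congr' ?_⟩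
    · have := le_ciSup hbdd 0
      simp only [max_self] at this
      linarith
    · exact ciSup_le fun t => (h _ (le_max_right _ _)).2.le
    · filter_upwards [eventually_ge_atTop 0] with t ht
      rw [max_eq_left ht]
  obtain ⟨l, hlA, hlB, hl⟩ := hxl
  have hy0 : Tendsto y atTop (𝓝 0) := barbalat (fun t _ => hx t) hl hvl
  have hdy0 : Tendsto (fun t => g (x t) + c * y t) atTop (𝓝 0) := by
    apply barbalat (K := K * W + c * (M + c * W)) (fun t _ => hy t) hy0
    intro s t hs ht
    have e : g (x s) + c * y s - (g (x t) + c * y t) = (g (x s) - g (x t)) + c * (y s - y t) := by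
      ring
    rw [e]
    refine (abs_add_le _ _).trans ?_
    rw [abs_mul, abs_of_pos hc]
    have h1 := hvl s t hs ht
    have h2 := hul s t hs ht
    have h3 : |g (x s) - g (x t)| ≤ K * |x s - x t| := hg.dist_le_mul _ _
    calc |g (x s) - g (x t)| + c * |y s - y t|
        ≤ K * (W * |s - t|) + c * ((M + c * W) * |s - t|) := by
          refine add_le_add (h3.trans ?_) ?_ <;> gcongr
      _ = _ := by ring
  have hg0 : Tendsto (fun t => g (x t)) atTop (𝓝 0) := by
    have := hdy0.sub (hy0.const_mul c)
    simpa using this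
  have hgl : g l = 0 := tendsto_nhds_unique ((hg.continuous.tendsto l).comp hl) hg0
  have hlB' : l = B := by
    by_contra hne
    have := hneg l hlA (lt_of_le_of_ne hlB hne)
    linarith
  exact ⟨hstrict, hlB' ▸ hl, hy0⟩

lemma shoot {g V : ℝ → ℝ} {K : ℝ≥0} (hg : LipschitzWith K g)
    (hV : ∀ u, HasDerivAt V (-g u) u) {A B c : ℝ} (hc : 0 < c) (hAB : A < B)
    (hB : g B = 0) (hneg : ∀ u, A < u → u < B → g u < 0) :
    ∃ x y : ℝ → ℝ, (∀ t, HasDerivAt x (y t) t) ∧ (∀ t, HasDerivAt y (g (x t) + c * y t) t) ∧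
      A < x 0 ∧ x 0 < B ∧ ∀ t, 0 ≤ t → 0 < y t ∧ x t < B := by
  set p : ℝ := (A + B) / 2 with hp
  have hpA : A < p := by rw [hp]; linarith
  have hpB : p < B := by rw [hp]; linarith
  let F : ℝ × ℝ → ℝ × ℝ := fun z => (z.2, g z.1 + c * z.2)
  let K' : ℝ≥0 := ⟨K + c + 1, by positivity⟩
  have hF : LipschitzWith K' F := by
    refine LipschitzWith.of_dist_le_mul fun z w => ?_
    show dist (F z) (F w) ≤ (K + c + 1 : ℝ) * dist z w
    have h1 : |z.1 - w.1| ≤ dist z w := le_max_left _ _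
    have h2 : |z.2 - w.2| ≤ dist z w := le_max_right _ _
    have h3 : |g z.1 - g w.1| ≤ K * |z.1 - w.1| := hg.dist_le_mul _ _
    have hd : 0 ≤ dist z w := dist_nonneg
    have hK : (0:ℝ) ≤ K := K.2
    have hKd := mul_nonneg hK hd
    have hcd := mul_nonneg hc.le hd
    rw [Prod.dist_eq]
    apply max_le
    · show |z.2 - w.2| ≤ _
      nlinarith
    · show |(g z.1 + c * z.2) - (g w.1 + c * w.2)| ≤ _
      have e : (g z.1 + c * z.2) - (g w.1 + c * w.2) = (g z.1 - g w.1) + c * (z.2 - w.2) := by ring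
      rw [e]
      refine (abs_add_le _ _).trans ?_
      rw [abs_mul, abs_of_pos hc]
      have h4 : K * |z.1 - w.1| ≤ K * dist z w := by gcongr
      have h5 : c * |z.2 - w.2| ≤ c * dist z w := by gcongr
      nlinarith
  choose Z hZ0 hZ using fun q : ℝ => global_sol F K' hF (p, q)
  have hxd : ∀ q t, HasDerivAt (fun t => (Z q t).1) ((Z q t).2) t := fun q t => (hZ q t).fst
  have hyd : ∀ q t, HasDerivAt (fun t => (Z q t).2) (g (Z q t).1 + c * (Z q t).2) t :=
    fun q t => (hZ q t).snd
  have hZc : ∀ q, Continuous (Z q) := fun q =>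
    continuous_iff_continuousAt.2 fun t => (hZ q t).continuousAt
  have hcx : ∀ q, Continuous fun t => (Z q t).1 := fun q => (hZc q).fst
  have hcy : ∀ q, Continuous fun t => (Z q t).2 := fun q => (hZc q).snd
  have hgron : ∀ q q' T t, 0 ≤ t → t ≤ T →
      dist (Z q t) (Z q' t) ≤ |q - q'| * Real.exp (K' * T) := by
    intro q q' T t ht htT
    have h1 := dist_le_of_trajectories_ODE (v := fun _ => F) (K := K') (f := Z q) (g := Z q')
      (a := 0) (b := T) (δ := |q - q'|) (fun _ => hF) (hZc q).continuousOn
      (fun t _ => (hZ q t).hasDerivWithinAt) (hZc q').continuousOn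
      (fun t _ => (hZ q' t).hasDerivWithinAt)
      (by rw [hZ0, hZ0, Prod.dist_eq]; simp [Real.dist_eq]) t ⟨ht, htT⟩
    refine h1.trans ?_
    have hK : (0:ℝ) ≤ K' := K'.2
    have : (K' : ℝ) * (t - 0) ≤ K' * T := by gcongr; linarith
    gcongr
  have hopen : ∀ (U : Set (ℝ × ℝ)), IsOpen U → ∀ T, 0 ≤ T → ∀ q,
      (∀ t, 0 ≤ t → t ≤ T → Z q t ∈ U) → ∀ᶠ q' in 𝓝 q, ∀ t, 0 ≤ t → t ≤ T → Z q' t ∈ U := by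
    intro U hU T hT q hq
    have hcomp : IsCompact (Z q '' Set.Icc 0 T) := isCompact_Icc.image (hZc q)
    obtain ⟨δ, hδ, hsub⟩ := hcomp.exists_thickening_subset_open hU
      (by rintro _ ⟨t, ht, rfl⟩; exact hq t ht.1 ht.2)
    have hexp : 0 < Real.exp (K' * T) := Real.exp_pos _
    filter_upwards [Metric.ball_mem_nhds q (div_pos hδ hexp)] with q' hq' t ht htT
    apply hsub
    rw [Metric.mem_thickening_iff]
    refine ⟨Z q t, ⟨t, ⟨ht, htT⟩, rfl⟩, ?_⟩
    refine (hgron q' q T t ht htT).trans_lt ?_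
    rw [Metric.mem_ball, Real.dist_eq, lt_div_iff₀ hexp] at hq'
    exact hq'
  let S1 : Set ℝ := {q | ∃ t, 0 ≤ t ∧ B < (Z q t).1 ∧ ∀ s, 0 ≤ s → s ≤ t → 0 < (Z q s).2}
  let S2 : Set ℝ := {q | ∃ t, 0 ≤ t ∧ (Z q t).2 < 0 ∧ ∀ s, 0 ≤ s → s ≤ t → (Z q s).1 < B}
  have hS1 : IsOpen S1 := by
    rw [isOpen_iff_mem_nhds]
    rintro q ⟨t, ht, h1, h2⟩
    have e1 := hopen {z | 0 < z.2} (isOpen_lt continuous_const continuous_snd) t ht q h2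
    have e2 : ∀ᶠ q' in 𝓝 q, B < (Z q' t).1 := by
      have hct : ContinuousAt (fun q' => Z q' t) q := by
        rw [Metric.continuousAt_iff]
        intro ε hε
        have hexp : 0 < Real.exp (K' * t) := Real.exp_pos _
        refine ⟨ε / Real.exp (K' * t), div_pos hε hexp, fun {q'} hq' => ?_⟩
        refine (hgron q' q t t ht le_rfl).trans_lt ?_
        rwa [Real.dist_eq, lt_div_iff₀ hexp] at hq'
      exact hct.fst.eventually (lt_mem_nhds h1)
    filter_upwards [e1, e2] with q' h3 h4
    exact ⟨t, ht, h4, h3⟩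
  have hS2 : IsOpen S2 := by
    rw [isOpen_iff_mem_nhds]
    rintro q ⟨t, ht, h1, h2⟩
    have e1 := hopen {z | z.1 < B} (isOpen_lt continuous_fst continuous_const) t ht q h2
    have e2 : ∀ᶠ q' in 𝓝 q, (Z q' t).2 < 0 := by
      have hct : ContinuousAt (fun q' => Z q' t) q := by
        rw [Metric.continuousAt_iff]
        intro ε hε
        have hexp : 0 < Real.exp (K' * t) := Real.exp_pos _
        refine ⟨ε / Real.exp (K' * t), div_pos hε hexp, fun {q'} hq' => ?_⟩
        refine (hgron q' q t t ht le_rfl).trans_lt ?_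
        rwa [Real.dist_eq, lt_div_iff₀ hexp] at hq'
      exact hct.snd.eventually (gt_mem_nhds h1)
    filter_upwards [e1, e2] with q' h3 h4
    exact ⟨t, ht, h4, h3⟩
  have hdisj : ∀ q, q ∈ S1 → q ∈ S2 → False := by
    rintro q ⟨t1, ht1, h1, h2⟩ ⟨t2, ht2, h3, h4⟩
    rcases le_total t1 t2 with h | h
    · linarith [h4 t1 ht1 h]
    · linarith [h2 t2 ht2 h]
  -- going strictly down after a zero of `y`
  have hdown : ∀ q t0, 0 ≤ t0 → (Z q t0).2 = 0 → A < (Z q t0).1 →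
      (∀ s, 0 ≤ s → s ≤ t0 → (Z q s).1 < B) → q ∈ S2 := by
    intro q t0 ht0 hy0 hxA hxB
    have hd := hyd q t0
    rw [hy0, mul_zero, add_zero] at hd
    have hgneg : g (Z q t0).1 < 0 := hneg _ hxA (hxB t0 ht0 le_rfl)
    have e1 : ∀ᶠ t in 𝓝[>] t0, (Z q t).2 < 0 := by
      have h1 := ((hasDerivAt_iff_tendsto_slope.1 hd).mono_left (nhdsGT_le_nhdsNE t0)).eventually (gt_mem_nhds hgneg)
      filter_upwards [h1, self_mem_nhdsWithin] with t ht1 ht2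
      have ht2 : t0 < t := ht2
      rw [slope_def_field, hy0, sub_zero] at ht1
      by_contra hcon
      push Not at hcon
      have := div_nonneg hcon (by linarith : 0 ≤ t - t0)
      linarith
    obtain ⟨η, hη, hη2⟩ := Metric.eventually_nhds_iff.1
      ((hcx q).continuousAt.eventually (gt_mem_nhds (hxB t0 ht0 le_rfl)))
    have e2 : ∀ᶠ t in 𝓝[>] t0, t < t0 + η :=
      nhdsWithin_le_nhds (gt_mem_nhds (by linarith))
    obtain ⟨t, ⟨ht1, ht2⟩, ht3⟩ := ((e1.and e2).and self_mem_nhdsWithin).exists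
    have ht3 : t0 < t := ht3
    refine ⟨t, by linarith, ht1, fun s hs hst => ?_⟩
    rcases le_total s t0 with h | h
    · exact hxB s hs h
    · apply hη2
      rw [Real.dist_eq, abs_lt]; constructor <;> linarith
  have hup : ∀ q t0, 0 ≤ t0 → (Z q t0).1 = B →
      (∀ s, 0 ≤ s → s ≤ t0 → 0 < (Z q s).2) → q ∈ S1 := by
    intro q t0 ht0 hx0 hyp
    have hd := hxd q t0
    have hpos := hyp t0 ht0 le_rfl
    have e1 : ∀ᶠ t in 𝓝[>] t0, B < (Z q t).1 := by
      have h1 := ((hasDerivAt_iff_tendsto_slope.1 hd).mono_left (nhdsGT_le_nhdsNE t0)).eventually (lt_mem_nhds hpos)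
      filter_upwards [h1, self_mem_nhdsWithin] with t ht1 ht2
      have ht2 : t0 < t := ht2
      rw [slope_def_field, hx0] at ht1
      have := (div_pos_iff_of_pos_right (by linarith : 0 < t - t0)).1 ht1
      linarith
    obtain ⟨η, hη, hη2⟩ := Metric.eventually_nhds_iff.1
      ((hcy q).continuousAt.eventually (lt_mem_nhds hpos))
    have e2 : ∀ᶠ t in 𝓝[>] t0, t < t0 + η :=
      nhdsWithin_le_nhds (gt_mem_nhds (by linarith))
    obtain ⟨t, ⟨ht1, ht2⟩, ht3⟩ := ((e1.and e2).and self_mem_nhdsWithin).exists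
    have ht3 : t0 < t := ht3
    refine ⟨t, by linarith, ht1, fun s hs hst => ?_⟩
    rcases le_total s t0 with h | h
    · exact hyp s hs h
    · apply hη2
      rw [Real.dist_eq, abs_lt]; constructor <;> linarith
  have hmono : ∀ q t0, (∀ s, 0 ≤ s → s < t0 → 0 < (Z q s).2) → 0 ≤ t0 → p ≤ (Z q t0).1 := by
    intro q t0 hyp ht0
    have : MonotoneOn (fun t => (Z q t).1) (Set.Icc 0 t0) := by
      apply monotoneOn_of_hasDerivWithinAt_nonneg (convex_Icc 0 t0) (hcx q).continuousOn
        (f' := fun t => (Z q t).2) (fun t _ => (hxd q t).hasDerivWithinAt)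
      intro t ht
      rw [interior_Icc] at ht
      exact (hyp t ht.1.le ht.2).le
    have h1 := this ⟨le_rfl, ht0⟩ ⟨ht0, le_rfl⟩ ht0
    simp only [hZ0] at h1
    exact h1
  -- closure at the end of an interval
  have hnonneg : ∀ (f : ℝ → ℝ), Continuous f → ∀ t0, 0 < t0 →
      (∀ s, 0 ≤ s → s < t0 → 0 < f s) → 0 ≤ f t0 := by
    intro f hf t0 ht0 h
    have h1 : Tendsto f (𝓝[<] t0) (𝓝 (f t0)) := hf.continuousAt.tendsto.mono_left nhdsWithin_le_nhds
    refine ge_of_tendsto h1 ?_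
    filter_upwards [Ioo_mem_nhdsLT ht0] with s hs
    exact (h s hs.1.le hs.2).le
  have htrap : ∀ q, 0 ≤ q → q ∉ S1 → q ∉ S2 → ∀ t, 0 ≤ t → 0 < (Z q t).2 ∧ (Z q t).1 < B := by
    intro q hq hq1 hq2 t ht
    by_contra hcon
    have hclosed : IsClosed ({t | (Z q t).2 ≤ 0} ∪ {t | B ≤ (Z q t).1}) :=
      (isClosed_le (hcy q) continuous_const).union (isClosed_le continuous_const (hcx q))
    have hmem : t ∈ ({t | (Z q t).2 ≤ 0} ∪ {t | B ≤ (Z q t).1}) := by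
      by_contra h
      simp only [Set.mem_union, Set.mem_ofPred_eq, not_or, not_le] at h
      exact hcon h
    obtain ⟨t1, ht1, -, hbad, hgood⟩ := first_time hclosed ht hmem
    simp only [Set.mem_union, Set.mem_ofPred_eq, not_or, not_le] at hbad hgood
    have hyge : 0 ≤ (Z q t1).2 := by
      rcases ht1.eq_or_lt with h | h
      · rw [← h, hZ0]; exact hq
      · exact hnonneg _ (hcy q) t1 h fun s hs hst => (hgood s hs hst).1
    have hxle : (Z q t1).1 ≤ B := by
      rcases ht1.eq_or_lt with h | h
      · rw [← h, hZ0]; exact hpB.le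
      · have := hnonneg (fun t => B - (Z q t).1) (continuous_const.sub (hcx q)) t1 h
          fun s hs hst => sub_pos.2 (hgood s hs hst).2
        linarith
    have hxp := hmono q t1 (fun s hs hst => (hgood s hs hst).1) ht1
    rcases hxle.lt_or_eq with hlt | heq
    · have hy0 : (Z q t1).2 = 0 := by
        rcases hbad with h | h
        · linarith
        · linarith
      apply hq2
      apply hdown q t1 ht1 hy0 (by linarith)
      intro s hs hst
      rcases hst.lt_or_eq with h | h
      · exact (hgood s hs h).2
      · rw [h]; exact hlt
    · rcases hyge.lt_or_eq with hlt | heq2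
      · apply hq1
        apply hup q t1 ht1 heq
        intro s hs hst
        rcases hst.lt_or_eq with h | h
        · exact (hgood s hs h).1
        · rw [h]; exact hlt
      · have hconst : ∀ t, HasDerivAt (fun _ : ℝ => ((B, 0) : ℝ × ℝ)) (F (B, 0)) t := by
          intro t
          have : F (B, 0) = 0 := by simp [F, hB]
          rw [this]; exact hasDerivAt_const _ _
        have huniq := ODE_solution_unique_univ (v := fun _ => F) (s := fun _ => Set.univ) (K := K')
          (f := Z q) (g := fun _ => ((B, 0) : ℝ × ℝ)) (t₀ := t1)
          (fun _ => hF.lipschitzOnWith) (fun t => ⟨hZ q t, trivial⟩)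
          (fun t => ⟨hconst t, trivial⟩) (Prod.ext heq heq2.symm)
        have h0 := congrFun huniq 0
        rw [hZ0] at h0
        have : p = B := congrArg Prod.fst h0
        linarith
  -- a large initial velocity
  set Q : ℝ := Real.sqrt (2 * (|V B - V p| + 1)) with hQ
  have hQ0 : 0 ≤ Q := Real.sqrt_nonneg _
  have hQ2 : V B < Q ^ 2 / 2 + V p := by
    rw [hQ, Real.sq_sqrt (by positivity)]
    linarith [le_abs_self (V B - V p)]
  have h0S2 : (0:ℝ) ∈ S2 := by
    apply hdown 0 0 le_rfl
    · rw [hZ0]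
    · rw [hZ0]; exact hpA
    · intro s hs hs0
      rw [le_antisymm hs0 hs, hZ0]; exact hpB
  have hQS2 : Q ∉ S2 := by
    rintro ⟨t, ht, h1, h2⟩
    obtain ⟨t1, ht1, htt, hbad, hgood⟩ :=
      first_time (isClosed_le (hcy Q) continuous_const) ht (show t ∈ {t | (Z Q t).2 ≤ 0} from h1.le)
    simp only [Set.mem_ofPred_eq, not_le] at hbad hgood
    have hyge : 0 ≤ (Z Q t1).2 := by
      rcases ht1.eq_or_lt with h | h
      · rw [← h, hZ0]; exact hQ0
      · exact hnonneg _ (hcy Q) t1 h fun s hs hst => (hgood s hs hst)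
    have hy0 : (Z Q t1).2 = 0 := le_antisymm hbad hyge
    have hxp := hmono Q t1 hgood ht1
    have hHmono : Monotone fun t => (Z Q t).2 ^ 2 / 2 + V (Z Q t).1 := by
      apply monotone_of_hasDerivAt_nonneg (f' := fun t => c * (Z Q t).2 ^ 2)
      · intro t
        have h1 := (((hyd Q t).pow 2).div_const 2).add ((hV (Z Q t).1).comp t (hxd Q t))
        refine h1.congr_deriv ?_
        simp; ring
      · intro t
        have := mul_nonneg hc.le (sq_nonneg (Z Q t).2)
        simpa using this
    have e1 := hHmono ht1
    simp only [hZ0, hy0] at e1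
    have hVmono : MonotoneOn V (Set.Icc A B) := by
      apply monotoneOn_of_hasDerivWithinAt_nonneg (convex_Icc A B)
        (fun u _ => (hV u).continuousAt.continuousWithinAt)
        (f' := fun u => -g u) (fun t _ => (hV t).hasDerivWithinAt)
      intro t ht
      rw [interior_Icc] at ht
      linarith [hneg t ht.1 ht.2]
    have hlt := h2 t1 ht1 htt
    have e2 := hVmono ⟨by linarith, hlt.le⟩ ⟨hAB.le, le_rfl⟩ hlt.le
    norm_num at e1
    linarith
  have hex : ∃ q, 0 ≤ q ∧ q ∉ S1 ∧ q ∉ S2 := by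
    by_contra hcon
    push Not at hcon
    have hQS1 : Q ∈ S1 := by
      by_contra h
      exact hQS2 (hcon Q hQ0 h)
    obtain ⟨q, -, hq1, hq2⟩ := (isPreconnected_Icc (a := (0:ℝ)) (b := Q)) S1 S2 hS1 hS2
      (fun q hq => or_iff_not_imp_left.2 (hcon q hq.1))
      ⟨Q, ⟨hQ0, le_rfl⟩, hQS1⟩ ⟨0, ⟨le_rfl, hQ0⟩, h0S2⟩
    exact hdisj q hq1 hq2
  obtain ⟨q, hq0, hq1, hq2⟩ := hex
  refine ⟨fun t => (Z q t).1, fun t => (Z q t).2, hxd q, hyd q, ?_, ?_, htrap q hq0 hq1 hq2⟩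
  · simp only [hZ0]; exact hpA
  · simp only [hZ0]; exact hpB

lemma heteroclinic {g V : ℝ → ℝ} {K : ℝ≥0} (hg : LipschitzWith K g)
    (hV : ∀ u, HasDerivAt V (-g u) u) {A B L c : ℝ} (hc : 0 < c) (hAB : A < B) (hLA : L < A)
    (hB : g B = 0) (hneg : ∀ u, A < u → u < B → g u < 0) (hpos : ∀ u, u < A → 0 < g u)
    (hL : V B ≤ V L) :
    ∃ x y : ℝ → ℝ, (∀ t, HasDerivAt x (y t) t) ∧ (∀ t, HasDerivAt y (g (x t) + c * y t) t) ∧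
      (∀ t, L < x t ∧ x t < B) ∧ Tendsto x atTop (𝓝 B) ∧ Tendsto y atTop (𝓝 0) ∧
      Tendsto x atBot (𝓝 A) ∧ Tendsto y atBot (𝓝 0) := by
  obtain ⟨x, y, hx, hy, hxA, hxB, htrap⟩ := shoot hg hV hc hAB hB hneg
  obtain ⟨hE, hx1, hy1⟩ := saddle hg hV hc hneg hx hy hxA htrap
  have hu : ∀ t, HasDerivAt (fun t => x (-t)) (-y (-t)) t := by
    intro t
    have := (hx (-t)).comp t (hasDerivAt_neg t)
    refine this.congr_deriv ?_
    ring
  have hv : ∀ t, HasDerivAt (fun t => -y (-t)) (g (x (-t)) - c * (-y (-t))) t := by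
    intro t
    have := ((hy (-t)).comp t (hasDerivAt_neg t)).neg
    refine this.congr_deriv ?_
    ring
  obtain ⟨hin, hu1, hv1⟩ := lasalle hg hV hc hneg hpos hL hu hv (by simp; linarith)
    (by simpa using hxB) (by simpa using hE)
  refine ⟨x, y, hx, hy, ?_, hx1, hy1, ?_, ?_⟩
  · intro t
    rcases le_total 0 t with h | h
    · refine ⟨?_, (htrap t h).2⟩
      have hxmono : MonotoneOn x (Set.Ici 0) := by
        apply monotoneOn_of_hasDerivWithinAt_nonneg (convex_Ici 0)
          (fun t _ => (hx t).continuousAt.continuousWithinAt)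
          (f' := y) (fun t _ => (hx t).hasDerivWithinAt)
        intro t ht
        rw [interior_Ici] at ht
        exact (htrap t (le_of_lt ht)).1.le
      have := hxmono (Set.mem_Ici.2 le_rfl) h h
      linarith
    · have := hin (-t) (by linarith)
      simpa using this
  · have := hu1.comp tendsto_neg_atBot_atTop
    refine this.congr fun t => by simp
  · have := (hv1.comp tendsto_neg_atBot_atTop).neg
    rw [neg_zero] at this
    refine this.congr fun t => by simp

lemma profileF_symm (γ a b P : ℝ) : profileF γ a b P = profileF γ b a P := by
  unfold profileF
  rw [← neg_sub (a ^ γ) (b ^ γ), ← neg_sub a b, ← neg_sub (a ^ (γ + 1)) (b ^ (γ + 1)), neg_div_neg_eq,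
    neg_div_neg_eq, mul_comm b a]

lemma profile_het (γ κ a b c : ℝ) (hγ : 1 ≤ γ) (hκ : 0 < κ) (ha : 0 < a) (hab : a < b)
    (hc : 0 < c) :
    ∃ x y : ℝ → ℝ, (∀ t, HasDerivAt x (y t) t) ∧
      (∀ t, HasDerivAt y (κ * profileF γ a b (Real.exp (x t)) * Real.exp (-x t) + c * y t) t) ∧
      Tendsto x atTop (𝓝 (Real.log b)) ∧ Tendsto y atTop (𝓝 0) ∧
      Tendsto x atBot (𝓝 (Real.log a)) ∧ Tendsto y atBot (𝓝 0) := by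
  have hb : 0 < b := ha.trans hab
  have hba : 0 < b - a := by linarith
  set D : ℝ := (b ^ γ - a ^ γ) / (b - a) with hD
  set C : ℝ := (b ^ (γ + 1) - a ^ (γ + 1)) / (b - a) with hC
  have hDpos : 0 < D := div_pos (sub_pos.2 (Real.rpow_lt_rpow ha.le hab (by linarith))) hba
  have hf : ∀ P, profileF γ a b P = P ^ γ + a * b / P * D - C := fun P => rfl
  set α : ℝ := a * b * D with hα
  have hαpos : 0 < α := by positivity
  have hfa : profileF γ a b a = 0 := by
    rw [hf, hD, hC, Real.rpow_add_one ha.ne', Real.rpow_add_one hb.ne']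
    field_simp
    ring
  have hfb : profileF γ a b b = 0 := by
    rw [hf, hD, hC, Real.rpow_add_one ha.ne', Real.rpow_add_one hb.ne']
    field_simp
    ring
  have hconv : StrictConvexOn ℝ (Set.Ioi 0) (profileF γ a b) := by
    have h1 : ConvexOn ℝ (Set.Ioi 0) fun P : ℝ => P ^ γ :=
      (convexOn_rpow hγ).subset Set.Ioi_subset_Ici_self (convex_Ioi 0)
    have h2 : StrictConvexOn ℝ (Set.Ioi 0) fun P : ℝ => P ^ (-1 : ℤ) :=
      strictConvexOn_zpow (by norm_num) (by norm_num)
    refine ⟨convex_Ioi 0, fun x hx y hy hxy s t hs ht hst => ?_⟩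
    have e1 := h1.2 hx hy hs.le ht.le hst
    have e2 := h2.2 hx hy hxy hs ht hst
    simp only [smul_eq_mul, zpow_neg_one] at e1 e2 ⊢
    have e3 := mul_lt_mul_of_pos_left e2 hαpos
    have e4 : ∀ P, profileF γ a b P = P ^ γ + α * P⁻¹ - C := by
      intro P; rw [hf, hα]; ring
    rw [e4, e4, e4]
    have e5 : C = s * C + t * C := by rw [← add_mul, hst, one_mul]
    nlinarith
  have hfneg : ∀ P, a < P → P < b → profileF γ a b P < 0 := by
    intro P h1 h2
    have := hconv.2 (Set.mem_Ioi.2 ha) (Set.mem_Ioi.2 hb) hab.ne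
      (div_pos (by linarith : 0 < b - P) hba) (div_pos (by linarith : 0 < P - a) hba)
      (by field_simp; ring)
    have e : (b - P) / (b - a) * a + (P - a) / (b - a) * b = P := by field_simp; ring
    simp only [smul_eq_mul] at this
    rw [e, hfa, hfb, mul_zero, mul_zero, add_zero] at this
    exact this
  have hfpos : ∀ P, 0 < P → P < a → 0 < profileF γ a b P := by
    intro P h1 h2
    have hbP : 0 < b - P := by linarith
    have h3 : 0 < (b - a) / (b - P) := div_pos hba hbP
    have := hconv.2 (Set.mem_Ioi.2 h1) (Set.mem_Ioi.2 hb) (h2.trans hab).ne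
      h3 (div_pos (by linarith : 0 < a - P) hbP)
      (by field_simp; ring)
    have e : (b - a) / (b - P) * P + (a - P) / (b - P) * b = a := by field_simp; ring
    simp only [smul_eq_mul] at this
    rw [e, hfa, hfb, mul_zero, add_zero] at this
    exact (pos_iff_pos_of_mul_pos this).1 h3
  set A := Real.log a with hA
  set B := Real.log b with hB
  have hAB : A < B := Real.log_lt_log ha hab
  have heA : Real.exp A = a := Real.exp_log ha
  have heB : Real.exp B = b := Real.exp_log hb
  let g : ℝ → ℝ := fun u => κ * (Real.exp (u * γ) + α * Real.exp (-u) - C) * Real.exp (-u)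
  have hgf : ∀ u, g u = κ * profileF γ a b (Real.exp u) * Real.exp (-u) := by
    intro u
    simp only [g]
    rw [hf, Real.exp_mul, hα, Real.exp_neg]
    ring
  have hgsm : ContDiff ℝ 1 g := by fun_prop
  have hgneg : ∀ u, A < u → u < B → g u < 0 := by
    intro u h1 h2
    rw [hgf]
    have h3 := hfneg (Real.exp u) (heA ▸ Real.exp_lt_exp.2 h1) (heB ▸ Real.exp_lt_exp.2 h2)
    exact mul_neg_of_neg_of_pos (mul_neg_of_pos_of_neg hκ h3) (Real.exp_pos _)
  have hgpos : ∀ u, u < A → 0 < g u := by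
    intro u h1
    rw [hgf]
    have h3 := hfpos (Real.exp u) (Real.exp_pos u) (heA ▸ Real.exp_lt_exp.2 h1)
    exact mul_pos (mul_pos hκ h3) (Real.exp_pos _)
  have hgB : g B = 0 := by rw [hgf, heB, hfb]; simp
  -- choice of `L`
  have hLex : ∃ L, L < A ∧ 0 ≤ ∫ u in L..B, g u := by
    let G : ℝ → ℝ := fun u => κ * (-(α / 2) * Real.exp (-u) ^ 2 + C * Real.exp (-u))
    have hG : ∀ u, HasDerivAt G (κ * (α * Real.exp (-u) - C) * Real.exp (-u)) u := by
      intro u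
      have h1 : HasDerivAt (fun u : ℝ => Real.exp (-u)) (-Real.exp (-u)) u := by
        have := (hasDerivAt_neg u).exp
        simpa using this
      have h2 := (((h1.pow 2).const_mul (-(α / 2))).add (h1.const_mul C)).const_mul κ
      refine h2.congr_deriv ?_
      simp; ring
    have hlim : Tendsto (fun L => G B - G L) atBot atTop := by
      have h1 : Tendsto (fun L : ℝ => Real.exp (-L)) atBot atTop :=
        Real.tendsto_exp_atTop.comp tendsto_neg_atBot_atTop
      have h2 : Tendsto (fun z : ℝ => κ * (z * (α / 2 * z + -C)) + G B) atTop atTop := by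
        apply tendsto_atTop_add_const_right
        apply Tendsto.const_mul_atTop hκ
        apply Tendsto.atTop_mul_atTop₀ tendsto_id
        apply tendsto_atTop_add_const_right
        exact Tendsto.const_mul_atTop (by positivity) tendsto_id
      refine (h2.comp h1).congr fun L => ?_
      simp only [Function.comp, G]
      ring
    obtain ⟨L, hL1, hL2⟩ := ((hlim.eventually_ge_atTop 0).and (eventually_lt_atBot A)).exists
    refine ⟨L, hL2, ?_⟩
    have hIntegral : ∫ u in L..B, κ * (α * Real.exp (-u) - C) * Real.exp (-u) = G B - G L :=
      intervalIntegral.integral_eq_sub_of_hasDerivAt (fun u _ => hG u)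
        (Continuous.intervalIntegrable (by fun_prop) _ _)
    have hle : ∫ u in L..B, κ * (α * Real.exp (-u) - C) * Real.exp (-u) ≤ ∫ u in L..B, g u := by
      apply intervalIntegral.integral_mono_on (by linarith)
        (Continuous.intervalIntegrable (by fun_prop) _ _)
        (Continuous.intervalIntegrable hgsm.continuous _ _)
      intro u _
      simp only [g]
      have := Real.exp_pos (u * γ)
      have := Real.exp_pos (-u)
      gcongr
      linarith
    linarith
  obtain ⟨L, hLA, hLint⟩ := hLex
  have hLB : L ≤ B := by linarith
  obtain ⟨K, hK⟩ := hgsm.contDiffOn.exists_lipschitzOnWith one_ne_zero (convex_Icc L B) isCompact_Icc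
  let pr : ℝ → ℝ := fun u => (Set.projIcc L B hLB u : ℝ)
  have hprl : LipschitzWith 1 pr := by
    have := LipschitzWith.projIcc hLB
    exact (LipschitzWith.subtype_val _).comp this |>.weaken (by simp)
  have hprm : ∀ u, pr u ∈ Set.Icc L B := fun u => (Set.projIcc L B hLB u).2
  have hpre : ∀ u ∈ Set.Icc L B, pr u = u := fun u hu => by
    simp only [pr]; rw [Set.projIcc_of_mem hLB hu]
  let G : ℝ → ℝ := fun u => g (pr u)
  have hGl : LipschitzWith K G := by
    refine LipschitzWith.of_dist_le_mul fun u v => ?_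
    have h1 := hK.dist_le_mul _ (hprm u) _ (hprm v)
    have h2 := hprl.dist_le_mul u v
    rw [NNReal.coe_one, one_mul] at h2
    exact h1.trans (by gcongr)
  have hGg : ∀ u ∈ Set.Icc L B, G u = g u := fun u hu => by simp only [G]; rw [hpre u hu]
  let V : ℝ → ℝ := fun u => -∫ w in B..u, G w
  have hV : ∀ u, HasDerivAt V (-G u) u := fun u =>
    (intervalIntegral.integral_hasDerivAt_right (hGl.continuous.intervalIntegrable _ _)
      (hGl.continuous.stronglyMeasurableAtFilter _ _) hGl.continuous.continuousAt).neg
  have hVL : V B ≤ V L := by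
    simp only [V, intervalIntegral.integral_same, neg_zero]
    rw [← intervalIntegral.integral_symm]
    have : ∫ w in L..B, G w = ∫ w in L..B, g w := by
      apply intervalIntegral.integral_congr
      intro u hu
      rw [Set.uIcc_of_le hLB] at hu
      exact hGg u hu
    rw [this]; exact hLint
  obtain ⟨x, y, hx, hy, hin, l1, l2, l3, l4⟩ := heteroclinic hGl hV hc hAB hLA
    (by rw [hGg B ⟨hLB, le_rfl⟩, hgB])
    (fun u h1 h2 => by rw [hGg u ⟨by linarith, h2.le⟩]; exact hgneg u h1 h2)
    (fun u h1 => by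
      apply hgpos
      rcases le_total L u with h | h
      · rw [hpre u ⟨h, by linarith⟩]; exact h1
      · simp only [pr]; rw [Set.projIcc_of_le_left hLB h]; exact hLA) hVL
  refine ⟨x, y, hx, fun t => ?_, l1, l2, l3, l4⟩
  have := hy t
  rwa [hGg (x t) ⟨(hin t).1.le, (hin t).2.le⟩, hgf] at this

theorem stmt_2 (γ μ k Pm : ℝ) (hγ : 1 ≤ γ) (hμ : 0 < μ) (hk : 0 < k) (hPm : 0 < Pm) :
    ∃ ε > 0, ∀ s Pp : ℝ, 0 < Pp → |Pp - Pm| < ε →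
      ((0 < s ∧ Pp < Pm) ∨ (s < 0 ∧ Pm < Pp)) →
      ∃ P Q : ℝ → ℝ,
        (∀ y : ℝ, 0 < P y) ∧
        (∀ y : ℝ, HasDerivAt P (Q y) y) ∧
        (∀ y : ℝ, HasDerivAt Q
          (2 / k ^ 2 * profileF γ Pm Pp (P y) - 2 * μ * s / k ^ 2 * Q y + (Q y) ^ 2 / P y) y) ∧
        Tendsto (fun y => (P y, Q y)) atBot (𝓝 (Pm, 0)) ∧
        Tendsto (fun y => (P y, Q y)) atTop (𝓝 (Pp, 0)) := by
  refine ⟨1, one_pos, fun s Pp hPp _ hcase => ?_⟩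
  have hκ : 0 < 2 / k ^ 2 := by positivity
  -- it suffices to have a solution in logarithmic variables
  suffices hlog : ∃ u v : ℝ → ℝ, (∀ t, HasDerivAt u (v t) t) ∧
      (∀ t, HasDerivAt v (2 / k ^ 2 * profileF γ Pm Pp (Real.exp (u t)) * Real.exp (-u t)
        - 2 * μ * s / k ^ 2 * v t) t) ∧
      Tendsto u atBot (𝓝 (Real.log Pm)) ∧ Tendsto v atBot (𝓝 0) ∧
      Tendsto u atTop (𝓝 (Real.log Pp)) ∧ Tendsto v atTop (𝓝 0) by
    obtain ⟨u, v, hu, hv, l1, l2, l3, l4⟩ := hlog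
    have hP : ∀ t, HasDerivAt (fun t => Real.exp (u t)) (Real.exp (u t) * v t) t :=
      fun t => (hu t).exp
    have hlim : ∀ {F : Filter ℝ} {a : ℝ}, 0 < a → Tendsto u F (𝓝 (Real.log a)) →
        Tendsto v F (𝓝 0) →
        Tendsto (fun t => (Real.exp (u t), Real.exp (u t) * v t)) F (𝓝 (a, 0)) := by
      intro F a ha h1 h2
      have e1 : Tendsto (fun t => Real.exp (u t)) F (𝓝 a) := by
        have := (Real.continuous_exp.tendsto (Real.log a)).comp h1
        rwa [Real.exp_log ha] at this
      have e2 := e1.mul h2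
      rw [mul_zero] at e2
      exact e1.prodMk_nhds e2
    refine ⟨fun t => Real.exp (u t), fun t => Real.exp (u t) * v t, fun t => Real.exp_pos _, hP,
      fun t => ?_, hlim hPm l1 l2, hlim hPp l3 l4⟩
    refine ((hP t).mul (hv t)).congr_deriv ?_
    have hne := (Real.exp_pos (u t)).ne'
    rw [Real.exp_neg]
    field_simp
    ring
  rcases hcase with ⟨hs, hlt⟩ | ⟨hs, hlt⟩
  · obtain ⟨x, y, hx, hy, l1, l2, l3, l4⟩ := profile_het γ (2 / k ^ 2) Pp Pm (2 * μ * s / k ^ 2) hγ hκ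
      hPp hlt (by positivity)
    refine ⟨fun t => x (-t), fun t => -y (-t), fun t => ?_, fun t => ?_,
      l1.comp tendsto_neg_atBot_atTop, ?_, l3.comp tendsto_neg_atTop_atBot, ?_⟩
    · refine ((hx (-t)).comp t (hasDerivAt_neg t)).congr_deriv ?_
      ring
    · refine (((hy (-t)).comp t (hasDerivAt_neg t)).neg).congr_deriv ?_
      rw [profileF_symm γ Pp Pm]
      ring
    · have := (l2.comp tendsto_neg_atBot_atTop).neg
      rwa [neg_zero] at this
    · have := (l4.comp tendsto_neg_atTop_atBot).neg
      rwa [neg_zero] at this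
  · obtain ⟨x, y, hx, hy, l1, l2, l3, l4⟩ := profile_het γ (2 / k ^ 2) Pm Pp (2 * μ * (-s) / k ^ 2) hγ
      hκ hPm hlt (by have : 0 < -s := by linarith
                     positivity)
    refine ⟨x, y, hx, fun t => (hy t).congr_deriv ?_, l3, l4, l1, l2⟩
    ring
end

section
/- Let γ ≥ 1, s > 0, μ, k > 0, and let 0 < P⁺ < P⁻ be the two positive roots of f(P) = P^γ − C₁ + C₂/P, where C₁ = ((P⁺)^{γ+1} − (P⁻)^{γ+1})/(P⁺ − P⁻) and C₂ = P⁺P⁻·((P⁺)^γ − (P⁻)^γ)/(P⁺ − P⁻). Define F(P) = P^{γ+1}/(γ+1) − C₁P + C₂·ln P and F₁(P) = F(P) − (sμP/k)² − F(P⁻). If F₁(P) ≤ 0 for all 0 < P < P⁺, then there exists a heteroclinic solution of the system P' = (2/k²)Q̃, Q̃' = f(P) − (2μs/k²)Q̃ + (2/k²)Q̃²/P connecting (P⁻, 0) to (P⁺, 0): a C¹ solution (P, Q̃) : ℝ → (0,∞) × ℝ defined for all y ∈ ℝ with (P(y), Q̃(y)) → (P⁻, 0) as y → −∞ and (P(y),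 Q̃(y)) → (P⁺, 0) as y → +∞. -/
open Filter Topology

namespace QHD

open Set Metric
open scoped NNReal

/-- Global solutions of the autonomous equation `u' = V u`. -/
def Sol {E : Type*} [NormedAddCommGroup E] [NormedSpace ℝ E] (V : E → E) (u : ℝ → E) : Prop :=
  ∀ t, HasDerivAt u (V (u t)) t

variable {E : Type*} [NormedAddCommGroup E] [NormedSpace ℝ E]

lemma Sol.shift {V : E → E} {u : ℝ → E} (hu : Sol V u) (c : ℝ) : Sol V (fun t => u (c + t)) := by
  intro t
  exact (hu (c + t)).comp_const_add c t

lemma Sol.cont {V : E → E} {u : ℝ → E} (hu : Sol V u) : Continuous u :=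
  continuous_iff_continuousAt.2 fun t => (hu t).continuousAt

lemma Sol.dist_le_pos {V : E → E} {K : ℝ≥0} (hV : LipschitzWith K V) {u v : ℝ → E}
    (hu : Sol V u) (hv : Sol V v) {t : ℝ} (ht : 0 ≤ t) :
    dist (u t) (v t) ≤ dist (u 0) (v 0) * Real.exp (K * t) := by
  have := dist_le_of_trajectories_ODE (v := fun _ => V) (K := K) (f := u) (g := v) (a := 0)
    (b := t) (δ := dist (u 0) (v 0)) (fun _ => hV) hu.cont.continuousOn
    (fun s _ => (hu s).hasDerivWithinAt) hv.cont.continuousOn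
    (fun s _ => (hv s).hasDerivWithinAt) le_rfl t ⟨ht, le_rfl⟩
  simpa using this

lemma Sol.neg {V : E → E} {u : ℝ → E} (hu : Sol V u) : Sol (fun x => - V x) (fun t => u (-t)) := by
  intro t
  have := (hu (-t)).scomp t (hasDerivAt_neg t)
  simpa [Function.comp_def] using this

lemma Sol.dist_le {V : E → E} {K : ℝ≥0} (hV : LipschitzWith K V) {u v : ℝ → E}
    (hu : Sol V u) (hv : Sol V v) (t : ℝ) :
    dist (u t) (v t) ≤ dist (u 0) (v 0) * Real.exp (K * |t|) := by
  rcases le_total 0 t with h | h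
  · rw [abs_of_nonneg h]; exact Sol.dist_le_pos hV hu hv h
  · rw [abs_of_nonpos h]
    have hV' : LipschitzWith K (fun x => - V x) := by
      intro x y
      simpa using hV x y
    have := Sol.dist_le_pos hV' hu.neg hv.neg (t := -t) (by linarith)
    simpa using this

lemma exists_sol [CompleteSpace E] {V : E → E} {K : ℝ≥0} (hV : LipschitzWith K V) {L : ℝ≥0}
    (hL : ∀ x, ‖V x‖ ≤ L) (x : E) : ∃ u : ℝ → E, u 0 = x ∧ Sol V u := by
  have key : ∀ n : ℕ, ∃ u : ℝ → E, u 0 = x ∧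
      ∀ t ∈ Ioo (-(n + 1 : ℝ)) (n + 1), HasDerivAt u (V (u t)) t := by
    intro n
    have h0 : (0 : ℝ) ∈ Icc (-(n + 1 : ℝ)) (n + 1) := ⟨by linarith [n.cast_nonneg (α := ℝ)],
      by positivity⟩
    have pl : IsPicardLindelof (fun _ => V) (⟨0, h0⟩ : Icc (-(n + 1 : ℝ)) (n + 1)) x
        (L * (n + 1)) 0 L K :=
      { lipschitzOnWith := fun _ _ => hV.lipschitzOnWith
        continuousOn := fun _ _ => continuousOn_const
        norm_le := fun _ _ y _ => hL y
        mul_max_le := by simp }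
    obtain ⟨u, hu0, hu⟩ := pl.exists_eq_forall_mem_Icc_hasDerivWithinAt₀
    exact ⟨u, hu0, fun t ht => (hu t ⟨ht.1.le, ht.2.le⟩).hasDerivAt (Icc_mem_nhds ht.1 ht.2)⟩
  choose U hU0 hU using key
  have agree : ∀ m n : ℕ, m ≤ n → EqOn (U m) (U n) (Ioo (-(m + 1 : ℝ)) (m + 1)) := by
    intro m n hmn
    have hmn' : (m : ℝ) ≤ n := by exact_mod_cast hmn
    refine ODE_solution_unique_of_mem_Ioo (v := fun _ => V) (s := fun _ => univ) (K := K) (t₀ := 0)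
      (fun _ _ => hV.lipschitzOnWith) ⟨by linarith [m.cast_nonneg (α := ℝ)], by positivity⟩
      (fun t ht => ⟨hU m t ht, trivial⟩)
      (fun t ht => ⟨hU n t ⟨by linarith [ht.1], by linarith [ht.2]⟩, trivial⟩) ?_
    rw [hU0, hU0]
  have ex : ∀ t : ℝ, ∃ n : ℕ, |t| < n := fun t => exists_nat_gt _
  choose N hN using ex
  have eqU : ∀ (n : ℕ) (t : ℝ), t ∈ Ioo (-(n + 1 : ℝ)) (n + 1) → U (N t) t = U n t := by
    intro n t ht
    have := abs_lt.1 (hN t)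
    rcases le_total (N t) n with h | h
    · exact agree _ _ h ⟨by linarith, by linarith⟩
    · exact (agree _ _ h ht).symm
  refine ⟨fun t => U (N t) t, hU0 _, fun t => ?_⟩
  have ht : t ∈ Ioo (-(N t + 1 : ℝ)) (N t + 1) := by
    have := abs_lt.1 (hN t)
    exact ⟨by linarith, by linarith⟩
  refine (hU (N t) t ht).congr_of_eventuallyEq ?_
  filter_upwards [Ioo_mem_nhds ht.1 ht.2] with s hs
  exact eqU _ _ hs

/-- Limit points of a trajectory are limit points along the trajectory through them. -/
lemma cluster_flow {V : E → E} {K : ℝ≥0} (hV : LipschitzWith K V) {u w : ℝ → E}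
    (hu : Sol V u) (hw : Sol V w) {l : Filter ℝ} (hl : ∀ c : ℝ, Tendsto (fun t => t + c) l l)
    (hz : MapClusterPt (w 0) l u) (c : ℝ) : MapClusterPt (w c) l u := by
  rw [nhds_basis_ball.mapClusterPt_iff_frequently] at hz ⊢
  intro ε hε
  have h1 := hz (ε / Real.exp (K * |c|)) (by positivity)
  refine (hl c).frequently (h1.mono fun t ht => ?_)
  rw [mem_ball] at ht ⊢
  have := Sol.dist_le hV (hu.shift t) hw c
  simp only [add_zero] at this
  rw [lt_div_iff₀ (Real.exp_pos _)] at ht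
  linarith

/-- LaSalle's principle. -/
lemma lasalle [CompleteSpace E] {V : E → E} {K : ℝ≥0} (hV : LipschitzWith K V) {L : ℝ≥0}
    (hL : ∀ x, ‖V x‖ ≤ L) {S : Set E} (hS : IsCompact S) {H : E → ℝ}
    (hH : ∀ z ∈ S, ContinuousAt H z) {A : Set E}
    (hA : ∀ w, Sol V w → (∀ t, w t ∈ S) → (∀ t, H (w t) = H (w 0)) → w 0 ∈ A)
    {l : Filter ℝ} (hl : ∀ c : ℝ, Tendsto (fun t => t + c) l l)
    {u : ℝ → E} (hu : Sol V u) (huS : ∀ᶠ t in l, u t ∈ S) {h : ℝ}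
    (hh : Tendsto (fun t => H (u t)) l (𝓝 h)) {z : E} (hz : MapClusterPt z l u) :
    z ∈ A ∧ H z = h := by
  have key : ∀ y, MapClusterPt y l u → y ∈ S ∧ H y = h := by
    intro y hy
    have hyS := hS.isClosed.mem_of_mapClusterPt hy huS
    have h1 := hy.continuousAt_comp (hH y hyS)
    have h2 : ClusterPt (H y) (𝓝 h) := ClusterPt.mono h1 hh
    exact ⟨hyS, eq_of_nhds_neBot h2⟩
  obtain ⟨w, hw0, hw⟩ := exists_sol hV hL z
  have hc := fun c => key _ (cluster_flow hV hu hw hl (by rwa [hw0]) c)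
  refine ⟨?_, (key z hz).2⟩
  rw [← hw0]
  exact hA w hw (fun t => (hc t).1) (fun t => by rw [(hc t).2, (hc 0).2])

/-- Abstract existence of a heteroclinic orbit. -/
theorem core [CompleteSpace E] {V : E → E} {K : ℝ≥0} (hV : LipschitzWith K V) {L : ℝ≥0}
    (hL : ∀ x, ‖V x‖ ≤ L) {S : Set E} (hS : IsCompact S) {H : E → ℝ}
    (hH : ∀ z ∈ S, ContinuousAt H z) {zm zp : E} (hzm : zm ∈ S) (hVzm : V zm = 0)
    (hlt : H zm < H zp)
    (hA : ∀ w, Sol V w → (∀ t, w t ∈ S) → (∀ t, H (w t) = H (w 0)) → w 0 ∈ ({zm, zp} : Set E))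
    (hmono : ∀ u, Sol V u → ∀ t₀ : ℝ, (∀ t, t₀ ≤ t → u t ∈ S) →
      MonotoneOn (fun t => H (u t)) (Ici t₀))
    (x : ℕ → E) (hx : Tendsto x atTop (𝓝 zm)) (hxH : ∀ n, H zm < H (x n))
    (hinv : ∀ n u, Sol V u → u 0 = x n → ∀ t, 0 ≤ t → u t ∈ S) :
    ∃ u, Sol V u ∧ (∀ t, u t ∈ S) ∧ Tendsto u atBot (𝓝 zm) ∧ Tendsto u atTop (𝓝 zp) := by
  have hlT : ∀ c : ℝ, Tendsto (fun t : ℝ => t + c) atTop atTop :=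
    fun c => tendsto_atTop_add_const_right _ c tendsto_id
  have hlB : ∀ c : ℝ, Tendsto (fun t : ℝ => t + c) atBot atBot :=
    fun c => tendsto_atBot_add_const_right _ c tendsto_id
  have hHS : ContinuousOn H S := fun z hz => (hH z hz).continuousWithinAt
  obtain ⟨B, hB⟩ := (hS.image_of_continuousOn hHS).bddAbove
  obtain ⟨B', hB'⟩ := (hS.image_of_continuousOn hHS).bddBelow
  set m := (H zm + H zp) / 2 with hm
  choose φ hφ0 hφ using exists_sol hV hL
  have hφS : ∀ n t, 0 ≤ t → φ (x n) t ∈ S := fun n t ht => hinv n _ (hφ _) (hφ0 _) t ht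
  have hφm : ∀ n, MonotoneOn (fun t => H (φ (x n) t)) (Ici 0) :=
    fun n => hmono _ (hφ _) 0 (hφS n)
  -- monotone limits at `+∞`
  have limT : ∀ u, Sol V u → (∀ t, 0 ≤ t → u t ∈ S) → ∃ h, H (u 0) ≤ h ∧
      Tendsto (fun t => H (u t)) atTop (𝓝 h) := by
    intro u hu huS
    have hmon := hmono u hu 0 huS
    have hm2 : Monotone (fun t => H (u (max t 0))) := fun a b hab =>
      hmon (mem_Ici.2 (le_max_right _ _)) (mem_Ici.2 (le_max_right _ _)) (max_le_max_right 0 hab)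
    have hbd : BddAbove (range (fun t => H (u (max t 0)))) :=
      ⟨B, by rintro _ ⟨t, rfl⟩; exact hB ⟨_, huS _ (le_max_right _ _), rfl⟩⟩
    refine ⟨⨆ t, H (u (max t 0)), ?_, ?_⟩
    · have := le_ciSup hbd 0
      simpa using this
    · refine (tendsto_atTop_ciSup hm2 hbd).congr' ?_
      filter_upwards [eventually_ge_atTop 0] with t ht
      rw [max_eq_left ht]
  -- forward limit points
  have fwd : ∀ u, Sol V u → (∀ t, 0 ≤ t → u t ∈ S) → H zm < H (u 0) →
      Tendsto u atTop (𝓝 zp) ∧ Tendsto (fun t => H (u t)) atTop (𝓝 (H zp)) := by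
    intro u hu huS hu0
    obtain ⟨h, hh0, hh⟩ := limT u hu huS
    have hev : ∀ᶠ t in atTop, u t ∈ S := by
      filter_upwards [eventually_ge_atTop 0] with t ht using huS t ht
    have hcl : ∀ z, MapClusterPt z atTop u → z = zp ∧ H z = h := by
      intro z hz
      obtain ⟨h1, h2⟩ := lasalle hV hL hS hH hA hlT hu hev hh hz
      refine ⟨?_, h2⟩
      rcases h1 with h1 | h1
      · subst h1; linarith
      · exact h1
    obtain ⟨z, -, hz⟩ := hS.exists_mapClusterPt_of_frequently hev.frequently
    obtain ⟨h1, h2⟩ := hcl z hz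
    refine ⟨hS.tendsto_nhds_of_unique_mapClusterPt hev fun y _ hy => (hcl y hy).1, ?_⟩
    rw [← h1, h2]; exact hh
  -- crossing times
  have hxm : Tendsto (fun n => H (x n)) atTop (𝓝 (H zm)) := (hH zm hzm).tendsto.comp hx
  have hmzm : H zm < m := by rw [hm]; linarith
  have hmzp : m < H zp := by rw [hm]; linarith
  have hev0 : ∀ᶠ n in atTop, H (x n) < m := hxm.eventually_lt_const hmzm
  have cross : ∀ n, ∃ T, 0 ≤ T ∧ (H (x n) < m → H (φ (x n) T) = m) := by
    intro n
    by_cases hn : H (x n) < m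
    · have h1 := (fwd _ (hφ (x n)) (hφS n) (by rw [hφ0]; exact hxH n)).2
      obtain ⟨t, ht1, ht2⟩ := ((h1.eventually_const_lt hmzp).and (eventually_ge_atTop 0)).exists
      have hc : ContinuousOn (fun t => H (φ (x n) t)) (Icc 0 t) := fun s hs =>
        ((hH _ (hφS n s hs.1)).comp (hφ (x n)).cont.continuousAt).continuousWithinAt
      obtain ⟨T, hT, hT2⟩ := intermediate_value_Icc ht2 hc
        (show m ∈ _ from ⟨by rw [hφ0]; exact hn.le, ht1.le⟩)
      exact ⟨T, hT.1, fun _ => hT2⟩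
    · exact ⟨0, le_rfl, fun h => absurd h hn⟩
  choose T hT0 hT using cross
  have hzmSol : Sol V (fun _ => zm) := fun t => by
    show HasDerivAt (fun _ => zm) (V zm) t
    rw [hVzm]; exact hasDerivAt_const _ _
  have hTlarge : ∀ t : ℝ, 0 ≤ t → ∀ᶠ n in atTop, t < T n := by
    intro t ht
    have hlim : Tendsto (fun n => φ (x n) t) atTop (𝓝 zm) := by
      rw [tendsto_iff_dist_tendsto_zero]
      refine squeeze_zero (fun _ => dist_nonneg)
        (fun n => Sol.dist_le hV (hφ (x n)) hzmSol t) ?_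
      have := (tendsto_iff_dist_tendsto_zero.1 hx).mul_const (Real.exp (K * |t|))
      simpa [hφ0] using this
    have hlimH : Tendsto (fun n => H (φ (x n) t)) atTop (𝓝 (H zm)) :=
      (hH zm hzm).tendsto.comp hlim
    filter_upwards [hlimH.eventually_lt_const hmzm, hev0] with n h1 h2
    by_contra hcon
    have := hφm n (hT0 n) ht (not_lt.1 hcon)
    simp only [hT n h2] at this
    linarith
  -- limit of the crossing points
  obtain ⟨y, hyS, ψ, hψ, hy⟩ := hS.tendsto_subseq (fun n => hφS n (T n) (hT0 n))
  have hψT := hψ.tendsto_atTop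
  have hHy : H y = m := by
    have h1 : Tendsto (fun j => H (φ (x (ψ j)) (T (ψ j)))) atTop (𝓝 (H y)) :=
      (hH y hyS).tendsto.comp hy
    refine tendsto_nhds_unique h1 (tendsto_const_nhds.congr' ?_)
    filter_upwards [hψT.eventually hev0] with j hj using (hT _ hj).symm
  have huS : ∀ t, φ y t ∈ S := by
    intro t
    have hlim : Tendsto (fun j => φ (x (ψ j)) (T (ψ j) + t)) atTop (𝓝 (φ y t)) := by
      rw [tendsto_iff_dist_tendsto_zero]
      refine squeeze_zero (fun _ => dist_nonneg)
        (fun j => Sol.dist_le hV ((hφ (x (ψ j))).shift (T (ψ j))) (hφ y) t) ?_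
      have := (tendsto_iff_dist_tendsto_zero.1 hy).mul_const (Real.exp (K * |t|))
      simpa [hφ0] using this
    refine hS.isClosed.mem_of_tendsto hlim ?_
    filter_upwards [hψT.eventually (hTlarge |t| (abs_nonneg t))] with j hj
    exact hφS _ _ (by linarith [neg_abs_le t])
  refine ⟨φ y, hφ y, huS, ?_, ?_⟩
  · have hmon : Monotone (fun t => H (φ y t)) := fun a b hab =>
      hmono _ (hφ y) a (fun t _ => huS t) (mem_Ici.2 le_rfl) hab hab
    have hbd : BddBelow (range (fun t => H (φ y t))) :=
      ⟨B', by rintro _ ⟨t, rfl⟩; exact hB' ⟨_, huS _, rfl⟩⟩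
    have hh := tendsto_atBot_ciInf hmon hbd
    have hle := ciInf_le hbd 0
    simp only [hφ0, hHy] at hle
    refine hS.tendsto_nhds_of_unique_mapClusterPt (Eventually.of_forall huS) fun z _ hz => ?_
    obtain ⟨h1, h2⟩ := lasalle hV hL hS hH hA hlB (hφ y) (Eventually.of_forall huS) hh hz
    rcases h1 with h1 | h1
    · exact h1
    · have h1 : z = zp := h1
      rw [h1] at h2; linarith
  · exact (fwd _ (hφ y) (fun t _ => huS t) (by rw [hφ0, hHy]; exact hmzm)).1

theorem hetero (a c k Pp Pm p₀ : ℝ) (f F : ℝ → ℝ) (ha : a = 2 / k ^ 2) (hk : 0 < k) (hc : 0 < c)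
    (hPp : 0 < Pp) (hPpPm : Pp < Pm) (hp₀ : 0 < p₀)
    (hfs : ContDiffOn ℝ 1 f (Ioi 0)) (hFd : ∀ P, 0 < P → HasDerivAt F (f P) P)
    (hroots : ∀ P, 0 < P → f P = 0 → P = Pp ∨ P = Pm) (hf0 : f Pm = 0)
    (hFgt : ∀ P, Pp ≤ P → P < Pm → F Pm < F P)
    (hF₁ : ∀ P, 0 < P → P ≤ Pm → F P - F Pm ≤ (c * P / k) ^ 2)
    (hlo : ∀ P, 0 < P → P < p₀ → F P < F Pm) :
    ∃ P Q : ℝ → ℝ, (∀ y : ℝ, 0 < P y) ∧ (∀ y : ℝ, HasDerivAt P (a * Q y) y) ∧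
      (∀ y : ℝ, HasDerivAt Q (f (P y) - c * a * Q y + a * (Q y) ^ 2 / P y) y) ∧
      Tendsto (fun y => (P y, Q y)) atBot (𝓝 (Pm, 0)) ∧
      Tendsto (fun y => (P y, Q y)) atTop (𝓝 (Pp, 0)) := by
  have hPm : 0 < Pm := hPp.trans hPpPm
  have ha0 : 0 < a := by rw [ha]; positivity
  have hp₀Pp : p₀ ≤ Pp := by
    by_contra h
    exact absurd (hlo Pp hPp (not_le.1 h)) (not_lt.2 (hFgt Pp le_rfl hPpPm).le)
  have hp₀Pm : p₀ ≤ Pm := hp₀Pp.trans hPpPm.le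
  set M := c * Pm with hM
  have hM0 : 0 < M := by positivity
  set box : Set (ℝ × ℝ) := Icc p₀ Pm ×ˢ Icc (-M) M with hbox
  have hboxc : IsCompact box := isCompact_Icc.prod isCompact_Icc
  have hboxconv : Convex ℝ box := (convex_Icc _ _).prod (convex_Icc _ _)
  set G : ℝ × ℝ → ℝ × ℝ :=
    fun z => (a * z.2, f z.1 - c * a * z.2 + a * z.2 ^ 2 / z.1) with hG
  have hGs : ContDiffOn ℝ 1 G box := by
    have h1 : ContDiffOn ℝ 1 (fun z : ℝ × ℝ => f z.1) box :=
      hfs.comp contDiff_fst.contDiffOn (fun z hz => lt_of_lt_of_le hp₀ hz.1.1)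
    have h2 : ContDiffOn ℝ 1 (fun z : ℝ × ℝ => a * z.2 ^ 2 / z.1) box :=
      ContDiffOn.div (by fun_prop) (by fun_prop) (fun z hz => (lt_of_lt_of_le hp₀ hz.1.1).ne')
    refine ContDiffOn.prodMk (by fun_prop) ?_
    exact (h1.sub (by fun_prop)).add h2
  obtain ⟨KG, hKG⟩ := hGs.exists_lipschitzOnWith one_ne_zero hboxconv hboxc
  set cl : ℝ × ℝ → ℝ × ℝ := fun z => (max p₀ (min Pm z.1), max (-M) (min M z.2)) with hcl
  have hclbox : ∀ z, cl z ∈ box := fun z =>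
    ⟨⟨le_max_left _ _, max_le hp₀Pm (min_le_left _ _)⟩,
      ⟨le_max_left _ _, max_le (by linarith) (min_le_left _ _)⟩⟩
  have hclid : ∀ z ∈ box, cl z = z := by
    rintro ⟨p, q⟩ ⟨⟨h1, h2⟩, h3, h4⟩
    simp only [hcl] at *
    rw [min_eq_right h2, max_eq_right h1, min_eq_right h4, max_eq_right h3]
  have hclL := ((LipschitzWith.prod_fst (α := ℝ) (β := ℝ)).const_min Pm).const_max p₀ |>.prodMk
    (((LipschitzWith.prod_snd (α := ℝ) (β := ℝ)).const_min M).const_max (-M))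
  set V : ℝ × ℝ → ℝ × ℝ := fun z => G (cl z) with hVdef
  have hV := lipschitzOnWith_univ.1
    (hKG.comp (hclL.lipschitzOnWith (s := univ)) (fun z _ => hclbox z))
  obtain ⟨L, hL⟩ := hboxc.exists_bound_of_continuousOn hGs.continuousOn
  have hVL : ∀ z, ‖V z‖ ≤ (L.toNNReal : ℝ≥0) := fun z =>
    (hL _ (hclbox z)).trans (Real.le_coe_toNNReal L)
  have hVG : ∀ z ∈ box, V z = G z := fun z hz => by simp only [hVdef]; rw [hclid z hz]
  set H : ℝ × ℝ → ℝ := fun z => F z.1 - z.2 ^ 2 / k ^ 2 - F Pm with hH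
  have hHc : ∀ z : ℝ × ℝ, 0 < z.1 → ContinuousAt H z := by
    intro z hz
    have h1 : ContinuousAt (fun z : ℝ × ℝ => F z.1) z :=
      ContinuousAt.comp (hFd z.1 hz).continuousAt continuousAt_fst
    exact (h1.sub (by fun_prop)).sub continuousAt_const
  set S : Set (ℝ × ℝ) := box ∩ H ⁻¹' (Ici 0) with hSdef
  have hSc : IsCompact S := by
    refine hboxc.of_isClosed_subset ?_ inter_subset_left
    refine ContinuousOn.preimage_isClosed_of_isClosed ?_ hboxc.isClosed isClosed_Ici
    exact fun z hz => (hHc z (lt_of_lt_of_le hp₀ hz.1.1)).continuousWithinAt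
  have hSpos : ∀ z ∈ S, 0 < z.1 := fun z hz => lt_of_lt_of_le hp₀ hz.1.1.1
  have hsq : ∀ p q : ℝ, 0 < p → p ≤ Pm → 0 ≤ H (p, q) → |q| ≤ c * p := by
    intro p q h1 h2 h3
    have h4 := hF₁ p h1 h2
    simp only [hH] at h3
    have h5 : q ^ 2 / k ^ 2 ≤ (c * p) ^ 2 / k ^ 2 := by rw [← div_pow (c * p)]; linarith
    have h6 : q ^ 2 ≤ (c * p) ^ 2 := by
      rwa [div_le_div_iff_of_pos_right (by positivity)] at h5
    exact abs_le_of_sq_le_sq h6 (by positivity)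
  have hSin : ∀ p q : ℝ, 0 < p → p ≤ Pm → 0 ≤ H (p, q) → (p, q) ∈ S := by
    intro p q h1 h2 h3
    have h4 := hsq p q h1 h2 h3
    have h5 : c * p ≤ M := mul_le_mul_of_nonneg_left h2 hc.le
    have h6 := abs_le.1 (h4.trans h5)
    refine ⟨⟨⟨?_, h2⟩, h6⟩, h3⟩
    by_contra h
    have h7 := hlo p h1 (not_le.1 h)
    simp only [hH] at h3
    have : 0 ≤ q ^ 2 / k ^ 2 := by positivity
    linarith
  have hder : ∀ u, Sol V u → ∀ t, u t ∈ S →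
      HasDerivAt (fun t => (u t).1) (a * (u t).2) t ∧
      HasDerivAt (fun t => (u t).2)
        (f (u t).1 - c * a * (u t).2 + a * (u t).2 ^ 2 / (u t).1) t ∧
      HasDerivAt (fun t => H (u t)) (a ^ 2 * (u t).2 ^ 2 * (c - (u t).2 / (u t).1)) t := by
    intro u hu t ht
    have h0 := hu t
    rw [hVG _ ht.1] at h0
    have h1 : HasDerivAt (fun t => (u t).1) (a * (u t).2) t := h0.fst
    have h2 : HasDerivAt (fun t => (u t).2)
        (f (u t).1 - c * a * (u t).2 + a * (u t).2 ^ 2 / (u t).1) t := h0.snd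
    refine ⟨h1, h2, ?_⟩
    have h3 := (((hFd _ (hSpos _ ht)).comp t h1).sub ((h2.pow 2).div_const (k ^ 2))).sub_const (F Pm)
    refine h3.congr_deriv ?_
    have := (hSpos _ ht).ne'
    rw [ha]
    field_simp
    push_cast
    ring
  have hmonD : ∀ u, Sol V u → ∀ D : Set ℝ, Convex ℝ D → (∀ t ∈ D, u t ∈ S) →
      MonotoneOn (fun t => H (u t)) D := by
    intro u hu D hD huD
    refine monotoneOn_of_hasDerivWithinAt_nonneg hD
      (fun t ht => (hder u hu t (huD t ht)).2.2.continuousAt.continuousWithinAt)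
      (fun t ht => (hder u hu t (huD t (interior_subset ht))).2.2.hasDerivWithinAt) ?_
    intro t ht
    have hS := huD t (interior_subset ht)
    have hp := hSpos _ hS
    have := hsq _ _ hp hS.1.1.2 hS.2
    have h2 : (u t).2 / (u t).1 ≤ c := by
      rw [div_le_iff₀ hp]; exact (le_abs_self _).trans this
    have : 0 ≤ c - (u t).2 / (u t).1 := by linarith
    positivity
  have hHm : H (Pm, 0) = 0 := by simp [hH]
  have hHp : 0 < H (Pp, 0) := by simpa [hH] using hFgt Pp le_rfl hPpPm
  have hzmS : (Pm, (0 : ℝ)) ∈ S := hSin _ _ hPm le_rfl hHm.ge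
  have hA : ∀ w, Sol V w → (∀ t, w t ∈ S) → (∀ t, H (w t) = H (w 0)) →
      w 0 ∈ ({(Pm, 0), (Pp, 0)} : Set (ℝ × ℝ)) := by
    intro w hw hwS hwH
    have hpos := fun t => hSpos _ (hwS t)
    have hdich : ∀ t, (w t).2 = 0 ∨ (w t).2 / (w t).1 = c := by
      intro t
      have h1 := (hder w hw t (hwS t)).2.2
      have h2 : HasDerivAt (fun t => H (w t)) 0 t := by
        rw [show (fun t => H (w t)) = fun _ => H (w 0) from funext hwH]
        exact hasDerivAt_const _ _
      have h3 := h1.unique h2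
      rcases mul_eq_zero.1 h3 with h4 | h4
      · left
        rcases mul_eq_zero.1 h4 with h5 | h5
        · exact absurd h5 (by positivity)
        · exact pow_eq_zero_iff two_ne_zero |>.1 h5
      · right; linarith
    have hrc : Continuous (fun t => (w t).2 / (w t).1) :=
      (continuous_snd.comp hw.cont).div (continuous_fst.comp hw.cont) (fun t => (hpos t).ne')
    have hQ0 : ∀ t, (w t).2 = 0 := by
      by_contra! hcon
      obtain ⟨t₀, ht₀⟩ := hcon
      have hr0 := (hdich t₀).resolve_left ht₀
      have hall : ∀ t, (w t).2 / (w t).1 = c := by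
        intro t
        refine (hdich t).resolve_left fun h => ?_
        have hmem : c / 2 ∈ range (fun t => (w t).2 / (w t).1) :=
          mem_range_of_exists_le_of_exists_ge hrc ⟨t, by simp only [h, zero_div]; positivity⟩
            ⟨t₀, by simp only [hr0]; linarith⟩
        obtain ⟨t', ht'⟩ := hmem
        simp only at ht'
        rcases hdich t' with h' | h'
        · rw [h', zero_div] at ht'; linarith
        · linarith
      have hmon : Monotone (fun t => (w t).1 - a * c * p₀ * t) := by
        have hd : ∀ t, HasDerivAt (fun t => (w t).1 - a * c * p₀ * t)
            (a * (w t).2 - a * c * p₀ * 1) t := fun t =>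
          (hder w hw t (hwS t)).1.sub ((hasDerivAt_id t).const_mul _)
        refine monotone_of_hasDerivAt_nonneg hd fun t => ?_
        have h1 := (div_eq_iff (hpos t).ne').1 (hall t)
        have h2 : p₀ ≤ (w t).1 := (hwS t).1.1.1
        have h3 : a * c * p₀ ≤ a * c * (w t).1 :=
          mul_le_mul_of_nonneg_left h2 (by positivity)
        simp only [Pi.zero_apply]
        rw [h1]
        nlinarith
      have h1 := hmon (show (0 : ℝ) ≤ Pm / (a * c * p₀) by positivity)
      simp only [mul_zero, sub_zero] at h1
      rw [mul_div_cancel₀ _ (by positivity)] at h1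
      have h2 := hpos 0
      have h3 : (w (Pm / (a * c * p₀))).1 ≤ Pm := (hwS _).1.1.2
      linarith
    have h1 := (hder w hw 0 (hwS 0)).2.1
    have h2 : HasDerivAt (fun t => (w t).2) 0 0 := by
      rw [show (fun t => (w t).2) = fun _ => 0 from funext hQ0]
      exact hasDerivAt_const _ _
    have h3 := h1.unique h2
    rw [hQ0 0] at h3
    have h4 : f (w 0).1 = 0 := by simpa using h3
    have h5 : w 0 = ((w 0).1, 0) := Prod.ext rfl (hQ0 0)
    rcases hroots _ (hpos 0) h4 with h6 | h6
    · right; rw [h5, h6]; rfl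
    · left; rw [h5, h6]
  set x : ℕ → ℝ × ℝ := fun n => (Pm - (Pm - Pp) * (1 / ((n : ℝ) + 1)), 0) with hx
  have hxl : Tendsto x atTop (𝓝 (Pm, 0)) := by
    refine Tendsto.prodMk_nhds ?_ tendsto_const_nhds
    simpa using (tendsto_one_div_add_atTop_nhds_zero_nat (𝕜 := ℝ)).const_mul (Pm - Pp)
      |>.const_sub Pm
  have hx1 : ∀ n, Pp ≤ (x n).1 ∧ (x n).1 < Pm := by
    intro n
    have h1 : 0 < 1 / ((n : ℝ) + 1) := by positivity
    have h2 : 1 / ((n : ℝ) + 1) ≤ 1 := by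
      rw [div_le_one (by positivity)]; linarith [n.cast_nonneg (α := ℝ)]
    simp only [hx]
    constructor <;> nlinarith
  have hxH : ∀ n, H (Pm, 0) < H (x n) := by
    intro n
    rw [hHm]
    have := hFgt _ (hx1 n).1 (hx1 n).2
    have h0 : (x n).2 = 0 := rfl
    simp only [hH, h0]
    simpa using this
  have hinv : ∀ n u, Sol V u → u 0 = x n → ∀ t, 0 ≤ t → u t ∈ S := by
    intro n u hu hu0
    set U : Set (ℝ × ℝ) := {z | 0 < z.1 ∧ z.1 < Pm ∧ 0 < H z} with hU
    have hUo : IsOpen U := by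
      rw [isOpen_iff_mem_nhds]
      rintro z ⟨h1, h2, h3⟩
      filter_upwards [continuousAt_fst.eventually_const_lt h1, continuousAt_fst.eventually_lt_const h2,
        (hHc z h1).eventually_const_lt h3] with y h4 h5 h6
      exact ⟨h4, h5, h6⟩
    have hUS : U ⊆ S := fun z hz => hSin z.1 z.2 hz.1 hz.2.1.le hz.2.2.le
    have hu0U : u 0 ∈ U := by
      rw [hu0]
      exact ⟨hPp.trans_le (hx1 n).1, (hx1 n).2, by rw [← hHm]; exact hxH n⟩
    suffices h : ∀ t, 0 ≤ t → u t ∈ U from fun t ht => hUS (h t ht)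
    by_contra! hcon
    set B : Set ℝ := Ici 0 ∩ u ⁻¹' Uᶜ with hB
    have hBc : IsClosed B := isClosed_Ici.inter (hUo.isClosed_compl.preimage hu.cont)
    have hBne : B.Nonempty := by
      obtain ⟨t, h1, h2⟩ := hcon
      exact ⟨t, h1, h2⟩
    have hBb : BddBelow B := ⟨0, fun t ht => ht.1⟩
    have hτ := hBc.csInf_mem hBne hBb
    set τ := sInf B with hτdef
    have hτ0 : 0 ≤ τ := hτ.1
    have hτne : 0 ≠ τ := fun h => hτ.2 (by rw [← h]; exact hu0U)
    have hbefore : ∀ t ∈ Ico 0 τ, u t ∈ S := by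
      intro t ht
      by_contra h
      exact absurd (csInf_le hBb (show t ∈ B from ⟨ht.1, fun h' => h (hUS h')⟩)) (not_le.2 ht.2)
    have hIcc : ∀ t ∈ Icc 0 τ, u t ∈ S := by
      have h1 : closure (Ico 0 τ) ⊆ u ⁻¹' S :=
        closure_minimal hbefore (hSc.isClosed.preimage hu.cont)
      rwa [closure_Ico hτne] at h1
    have h1 := hmonD u hu _ (convex_Icc 0 τ) hIcc ⟨le_rfl, hτ0⟩ ⟨hτ0, le_rfl⟩ hτ0
    have h2 : 0 < H (u τ) := lt_of_lt_of_le hu0U.2.2 h1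
    have h3 := hIcc τ ⟨hτ0, le_rfl⟩
    refine hτ.2 ⟨hSpos _ h3, lt_of_le_of_ne h3.1.1.2 fun h => ?_, h2⟩
    simp only [hH, h] at h2
    have : 0 ≤ (u τ).2 ^ 2 / k ^ 2 := by positivity
    linarith
  obtain ⟨u, hu, huS, hub, hut⟩ := core hV hVL hSc (fun z hz => hHc z (hSpos z hz)) hzmS
    (by
      show V (Pm, 0) = 0
      rw [hVG _ hzmS.1]
      simp [hG, hf0])
    (by rw [hHm]; exact hHp) hA
    (fun u hu t₀ h => hmonD u hu _ (convex_Ici t₀) h) x hxl hxH hinv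
  exact ⟨fun t => (u t).1, fun t => (u t).2, fun t => hSpos _ (huS t),
    fun t => (hder u hu t (huS t)).1, fun t => (hder u hu t (huS t)).2.1, hub, hut⟩

end QHD

/-- global (large-amplitude) existence of traveling wave profiles for `s > 0`:
if the restriction `F₁(P) = F(P) − (sμP/k)² − F(P⁻)` of the energy to the line `Q̃ = sμP` is
nonpositive on `(0, P⁺)`, then the profile system `P' = (2/k²)Q̃`,
`Q̃' = f(P) − (2μs/k²)Q̃ + (2/k²)Q̃²/P` has a heteroclinic from `(P⁻,0)` to `(P⁺,0)`. -/
theorem stmt_9 (γ s μ k Pp Pm C₁ C₂ : ℝ) (hγ : 1 ≤ γ) (hs : 0 < s) (hμ : 0 < μ) (hk : 0 < k)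
    (hPp : 0 < Pp) (hPpPm : Pp < Pm)
    (hC₁ : C₁ = (Pp ^ (γ + 1) - Pm ^ (γ + 1)) / (Pp - Pm))
    (hC₂ : C₂ = Pp * Pm * ((Pp ^ γ - Pm ^ γ) / (Pp - Pm)))
    (f F : ℝ → ℝ)
    (hf : ∀ P : ℝ, f P = P ^ γ - C₁ + C₂ / P)
    (hroot1 : f Pp = 0) (hroot2 : f Pm = 0)
    (hF : ∀ P : ℝ, F P = P ^ (γ + 1) / (γ + 1) - C₁ * P + C₂ * Real.log P)
    (hF₁ : ∀ P : ℝ, 0 < P → P < Pp → F P - (s * μ * P / k) ^ 2 - F Pm ≤ 0) :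
    ∃ P Q : ℝ → ℝ,
      (∀ y : ℝ, 0 < P y) ∧
      (∀ y : ℝ, HasDerivAt P (2 / k ^ 2 * Q y) y) ∧
      (∀ y : ℝ, HasDerivAt Q
        (f (P y) - 2 * μ * s / k ^ 2 * Q y + 2 / k ^ 2 * (Q y) ^ 2 / P y) y) ∧
      Tendsto (fun y => (P y, Q y)) atBot (𝓝 (Pm, 0)) ∧
      Tendsto (fun y => (P y, Q y)) atTop (𝓝 (Pp, 0)) := by
  have hPm : 0 < Pm := hPp.trans hPpPm
  have hγ0 : 0 < γ := by linarith
  have hC2pos : 0 < C₂ := by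
    rw [hC₂]
    have h1 : Pp ^ γ - Pm ^ γ < 0 := sub_neg.2 (Real.rpow_lt_rpow hPp.le hPpPm hγ0)
    have h2 : Pp - Pm < 0 := sub_neg.2 hPpPm
    have := div_pos_of_neg_of_neg h1 h2
    positivity
  -- `P f(P)` is strictly convex
  have hg : ∀ P, 0 < P → P * f P = P ^ (γ + 1) - C₁ * P + C₂ := by
    intro P hP
    rw [hf, Real.rpow_add hP, Real.rpow_one]
    field_simp
  have hgp := hg Pp hPp
  have hgm := hg Pm hPm
  rw [hroot1, mul_zero] at hgp
  rw [hroot2, mul_zero] at hgm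
  have hconv := strictConvexOn_rpow (p := γ + 1) (by linarith)
  -- three-point slope comparison
  have hthree : ∀ x y z : ℝ, 0 < x → x < y → y < z →
      (z - x) * (y * f y) < (z - y) * (x * f x) + (y - x) * (z * f z) := by
    intro x y z hx hxy hyz
    have h1 := hconv.2 (show x ∈ Set.Ici (0 : ℝ) from hx.le)
      (show z ∈ Set.Ici (0 : ℝ) from (hx.trans (hxy.trans hyz)).le) (hxy.trans hyz).ne
      (show 0 < (z - y) / (z - x) from div_pos (by linarith) (by linarith))
      (show 0 < (y - x) / (z - x) from div_pos (by linarith) (by linarith))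
      (by rw [← add_div, div_eq_one_iff_eq (by linarith)]; ring)
    have hzx : z - x ≠ 0 := by linarith
    have hzx0 : 0 < z - x := by linarith
    have h2 : ((z - y) / (z - x)) • x + ((y - x) / (z - x)) • z = y := by
      simp only [smul_eq_mul]; field_simp; ring
    rw [h2] at h1
    simp only [smul_eq_mul] at h1
    have h3 : (z - x) * y ^ (γ + 1) < (z - y) * x ^ (γ + 1) + (y - x) * z ^ (γ + 1) := by
      have := mul_lt_mul_of_pos_left h1 hzx0
      have e : (z - x) * ((z - y) / (z - x) * x ^ (γ + 1) + (y - x) / (z - x) * z ^ (γ + 1)) =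
          (z - y) * x ^ (γ + 1) + (y - x) * z ^ (γ + 1) := by
        rw [mul_add, ← mul_assoc, ← mul_assoc, mul_div_cancel₀ _ hzx, mul_div_cancel₀ _ hzx]
      rwa [e] at this
    rw [hg x hx, hg y (by linarith), hg z (by linarith)]
    linarith
  have hfneg : ∀ P, Pp < P → P < Pm → f P < 0 := by
    intro P h1 h2
    have h := hthree Pp P Pm hPp h1 h2
    rw [hroot1, hroot2] at h
    by_contra hc
    have : 0 ≤ (Pm - Pp) * (P * f P) :=
      mul_nonneg (by linarith) (mul_nonneg (by linarith) (not_lt.1 hc))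
    linarith
  have hroots : ∀ P, 0 < P → f P = 0 → P = Pp ∨ P = Pm := by
    intro P hP h0
    by_contra! hcon
    rcases lt_or_gt_of_ne hcon.1 with h1 | h1
    · have h := hthree P Pp Pm hP h1 hPpPm
      rw [h0, hroot1, hroot2] at h
      simp at h
    · rcases lt_or_gt_of_ne hcon.2 with h2 | h2
      · exact (hfneg P h1 h2).ne h0
      · have h := hthree Pp Pm P hPp hPpPm h2
        rw [h0, hroot1, hroot2] at h
        simp at h
  have hFd : ∀ P, 0 < P → HasDerivAt F (f P) P := by
    intro P hP
    have h1 := (((Real.hasDerivAt_rpow_const (p := γ + 1) (Or.inl hP.ne')).div_const (γ + 1)).sub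
      ((hasDerivAt_id P).const_mul C₁)).add ((Real.hasDerivAt_log hP.ne').const_mul C₂)
    rw [show F = _ from funext hF]
    refine h1.congr_deriv ?_
    rw [hf, add_sub_cancel_right]
    field_simp
  have hfs : ContDiffOn ℝ 1 f (Set.Ioi 0) := by
    rw [show f = _ from funext hf]
    intro P hP
    have hP' : P ≠ 0 := (Set.mem_Ioi.1 hP).ne'
    exact (((Real.contDiffAt_rpow_const_of_ne hP').sub contDiffAt_const).add
      (contDiffAt_const.div contDiffAt_id hP')).contDiffWithinAt
  have hanti : StrictAntiOn F (Set.Icc Pp Pm) := by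
    refine strictAntiOn_of_deriv_neg (convex_Icc _ _)
      (fun P hP => (hFd P (hPp.trans_le hP.1)).continuousAt.continuousWithinAt) fun P hP => ?_
    rw [interior_Icc] at hP
    rw [(hFd P (hPp.trans hP.1)).deriv]
    exact hfneg P hP.1 hP.2
  have hFp : F Pp - F Pm ≤ (s * μ * Pp / k) ^ 2 := by
    have hcont : Tendsto (fun P => F P - (s * μ * P / k) ^ 2 - F Pm) (𝓝[<] Pp)
        (𝓝 (F Pp - (s * μ * Pp / k) ^ 2 - F Pm)) := by
      have h1 : ContinuousAt (fun P => F P - (s * μ * P / k) ^ 2 - F Pm) Pp :=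
        ((hFd Pp hPp).continuousAt.sub (by fun_prop)).sub continuousAt_const
      exact h1.tendsto.mono_left nhdsWithin_le_nhds
    have h2 := le_of_tendsto hcont (b := 0) (by
      filter_upwards [Ioo_mem_nhdsLT hPp] with P hP using hF₁ P hP.1 hP.2)
    linarith
  have hF₁' : ∀ P, 0 < P → P ≤ Pm → F P - F Pm ≤ (s * μ * P / k) ^ 2 := by
    intro P h1 h2
    rcases lt_or_ge P Pp with h | h
    · linarith [hF₁ P h1 h]
    · have h3 := hanti.antitoneOn ⟨le_rfl, hPpPm.le⟩ ⟨h, h2⟩ h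
      have h4 : (s * μ * Pp / k) ^ 2 ≤ (s * μ * P / k) ^ 2 := by gcongr
      linarith
  obtain ⟨p₀, hp₀, hlo⟩ : ∃ p₀, 0 < p₀ ∧ ∀ P, 0 < P → P < p₀ → F P < F Pm := by
    have hT : Tendsto F (𝓝[>] 0) atBot := by
      have h1 : Tendsto (fun P : ℝ => P ^ (γ + 1) / (γ + 1) - C₁ * P) (𝓝[>] 0)
          (𝓝 ((0 : ℝ) ^ (γ + 1) / (γ + 1) - C₁ * 0)) := by
        have hc : ContinuousAt (fun P : ℝ => P ^ (γ + 1) / (γ + 1) - C₁ * P) 0 :=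
          ((Real.continuousAt_rpow_const 0 (γ + 1) (Or.inr (by linarith))).div_const _).sub
            (by fun_prop)
        exact hc.tendsto.mono_left nhdsWithin_le_nhds
      have h2 := h1.add_atBot (Real.tendsto_log_nhdsGT_zero.const_mul_atBot hC2pos)
      exact h2.congr fun P => (hF P).symm
    have h3 := hT.eventually_lt_atBot (F Pm)
    obtain ⟨p₀, hp₀, h4⟩ := mem_nhdsGT_iff_exists_Ioo_subset.1 h3
    exact ⟨p₀, hp₀, fun P h1 h2 => h4 ⟨h1, h2⟩⟩
  obtain ⟨P, Q, h1, h2, h3, h4, h5⟩ := QHD.hetero (2 / k ^ 2) (s * μ) k Pp Pm p₀ f F rfl hk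
    (by positivity) hPp hPpPm hp₀ hfs hFd hroots hroot2
    (fun P ha hb => hanti ⟨ha, hb.le⟩ ⟨hPpPm.le, le_rfl⟩ hb) hF₁' hlo
  refine ⟨P, Q, h1, h2, fun y => (h3 y).congr_deriv ?_, h4, h5⟩
  ring
end
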